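/- Let G be a connected planar graph with n ≥ 2 vertices and m edges, and suppose that for some ε ∈ (1, 5/2] the average degree satisfies 2m/n = 9/2 − ε. Then the 2-surviving rate satisfies ρ₂(G) ≥ (2/9)ε − 1/n. -/

import Mathlib

/-- The set of vertices on fire after `t` fire-spread rounds, when the fire breaks out
at `v` and the firefighters protect the vertices of `P s` in round `s + 1` (protection
happens just before the `s`-th spread step and is permanent). -/
def burnedSet {V : Type*} (G : SimpleGraph V) (v : V) (P : ℕ → Set V) : ℕ → Set V
  | 0 => {v}
  | t + 1 => burnedSet G v P t ∪
      {w | (∃ u ∈ burnedSet G v P t, G.Adj u w) ∧ ∀ s ≤ t, w ∉ P s}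

/-- A strategy `P` is valid for the per-round budgets `b` if in each round it protects
at most `b t` vertices, none of which are already on fire. -/
def ValidStrategy {V : Type*} (G : SimpleGraph V) (b : ℕ → ℕ) (v : V) (P : ℕ → Set V) : Prop :=
  ∀ t, (P t).Finite ∧ (P t).ncard ≤ b t ∧ Disjoint (P t) (burnedSet G v P t)

/-- `sn G b v` is the maximum number of vertices that can be saved (i.e. that never
catch fire) when the fire breaks out at `v` and the firefighters may protect at most
`b t` vertices in round `t + 1`. -/
noncomputable def sn {V : Type*} (G : SimpleGraph V) (b : ℕ → ℕ) (v : V) : ℕ :=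
  sSup {m | ∃ P, ValidStrategy G b v P ∧
    m = Nat.card {w : V | ∀ t, w ∉ burnedSet G v P t}}

/-- The surviving rate of `G` with per-round budgets `b` : the expected fraction of
vertices that can be saved when the starting vertex is chosen uniformly at random. -/
noncomputable def survivingRate {V : Type*} [Fintype V] (G : SimpleGraph V) (b : ℕ → ℕ) : ℝ :=
  (∑ v : V, (sn G b v : ℝ)) / (Fintype.card V : ℝ) ^ 2

/-- A plane embedding of a simple graph: vertices are points of the plane and edges are
simple arcs between their endpoints, such that arcs avoid all other vertices and two
arcs of distinct edges meet only in common endpoints. -/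
structure PlaneEmbedding {V : Type*} (G : SimpleGraph V) where
  pos : V → ℝ × ℝ
  arc : V → V → ℝ → ℝ × ℝ
  pos_inj : Function.Injective pos
  arc_cont : ∀ ⦃u v⦄, G.Adj u v → Continuous (arc u v)
  arc_injOn : ∀ ⦃u v⦄, G.Adj u v → Set.InjOn (arc u v) (Set.Icc 0 1)
  arc_zero : ∀ ⦃u v⦄, G.Adj u v → arc u v 0 = pos u
  arc_one : ∀ ⦃u v⦄, G.Adj u v → arc u v 1 = pos v
  arc_symm : ∀ ⦃u v⦄, G.Adj u v → ∀ t, arc v u t = arc u v (1 - t)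
  arc_avoid : ∀ ⦃u v⦄, G.Adj u v → ∀ w : V, pos w ∉ arc u v '' Set.Ioo 0 1
  arc_meet : ∀ ⦃u v x y⦄, G.Adj u v → G.Adj x y → s(u, v) ≠ s(x, y) →
      arc u v '' Set.Icc 0 1 ∩ arc x y '' Set.Icc 0 1 ⊆
        ({pos u, pos v} : Set (ℝ × ℝ)) ∩ {pos x, pos y}

/-- A graph is planar if it admits a plane embedding. -/
def IsPlanar {V : Type*} (G : SimpleGraph V) : Prop :=
  Nonempty (PlaneEmbedding G)

/-! Deleting vertices of degree one as long as there are any leaves a core with pendant trees.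

A fire in a pendant tree is held back by protecting the parent and the largest child of its origin;
summed over the `p` vertices outside the core this loses at most `p (p + 3) / 4` vertices. At a core
vertex whose degree in the core is two, only its pendant tree is lost.

At degree three, at least a third of the vertices can be saved off the pendant tree: besides all but
one of the neighbours, protect a wall made of two shortest paths from the origin, one distance class
per round, just ahead of the fire. Read off a drawing on a fine grid and triangulate; every edge of
the triangulation gives a wall, by the shortest paths to the vertices that its ends belong to. A
sink argument finds a triangle on the burning side of the walls of its three sides. Modulo two these
walls add up to the boundary of the triangle, so no vertex is on the burning side of all three, and
one of them saves a third.

Almost everything is saved at a vertex of degree three from which a short walk through vertices of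
degree at most four leads to one where the fire can be closed in. A discharging argument shows that
the remaining vertices of degree three are outweighed by those of larger degree, and then averaging
yields the bound if `p` is small compared with the number of vertices. If `p` is large, the vertices
outside the core save so much that simple bounds suffice at the core. -/

open Finset Relation

section Firefighting

variable {V : Type*} {G : SimpleGraph V} {b : ℕ → ℕ} {v : V}

theorem ncard_le_sn [Finite V] {P : ℕ → Set V} (hP : ValidStrategy G b v P) :
    {w : V | ∀ t, w ∉ burnedSet G v P t}.ncard ≤ sn G b v := by
  refine le_csSup ⟨Nat.card V, ?_⟩ ⟨P, hP, rfl⟩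
  rintro m ⟨P, -, rfl⟩
  exact Nat.card_le_card_of_injective _ Subtype.val_injective

/-- A containment of the fire started at `v`: only vertices of `B` ever burn, the vertex `x` not
before time `τ x`, when the vertices of `P t` are protected in round `t + 1`, at most `b t` of
them. -/
structure Containment (G : SimpleGraph V) (b : ℕ → ℕ) (v : V) (B : Set V) (τ : V → ℕ)
    (P : ℕ → Finset V) : Prop where
  card_le : ∀ t, #(P t) ≤ b t
  disjoint : ∀ t, ∀ x ∈ P t, x ∉ B
  root_mem : v ∈ B
  time_root : τ v = 0
  step : ∀ x ∈ B, ∀ y, G.Adj x y → (y ∈ B ∧ τ y ≤ τ x + 1) ∨ ∃ s ≤ τ x, y ∈ P s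

theorem Containment.burnedSet_subset {B : Set V} {τ : V → ℕ} {P : ℕ → Finset V}
    (h : Containment G b v B τ P) (t : ℕ) :
    burnedSet G v (fun t => (P t : Set V)) t ⊆ {x | x ∈ B ∧ τ x ≤ t} := by
  induction t with
  | zero =>
    rintro x rfl
    exact ⟨h.root_mem, h.time_root.le⟩
  | succ t ih =>
    rintro x (hx | ⟨⟨u, hu, hux⟩, hx⟩)
    · exact ⟨(ih hx).1, (ih hx).2.trans t.le_succ⟩
    · obtain ⟨huB, hut⟩ := ih hu
      obtain ⟨hxB, hτ⟩ | ⟨s, hs, hxs⟩ := h.step u huB x hux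
      · exact ⟨hxB, by omega⟩
      · exact absurd hxs (hx s (hs.trans hut))

theorem Containment.card_le_sn_add [Fintype V] {B : Set V} {τ : V → ℕ} {P : ℕ → Finset V}
    (h : Containment G b v B τ P) : Fintype.card V ≤ sn G b v + B.ncard := by
  have hvalid : ValidStrategy G b v fun t => (P t : Set V) := fun t =>
    ⟨(P t).finite_toSet, (Set.ncard_coe_finset _).trans_le (h.card_le t),
      Set.disjoint_left.2 fun x hx hxt => h.disjoint t x hx (h.burnedSet_subset t hxt).1⟩
  have hsub : Bᶜ ⊆ {w | ∀ t, w ∉ burnedSet G v (fun t => (P t : Set V)) t} :=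
    fun w hw t hwt => hw (h.burnedSet_subset t hwt).1
  have hcard := (Set.ncard_le_ncard hsub (Set.toFinite _)).trans (ncard_le_sn hvalid)
  have hsplit := Set.ncard_add_ncard_compl B
  rw [Nat.card_eq_fintype_card] at hsplit
  omega

theorem min_le_sn [Fintype V] (G : SimpleGraph V) (b : ℕ → ℕ) (v : V) :
    min (b 0) (Fintype.card V - 1) ≤ sn G b v := by
  classical
  have hle : min (b 0) (Fintype.card V - 1) ≤ #(univ.erase v) := by
    rw [card_erase_of_mem (mem_univ v)]
    exact min_le_right _ _
  obtain ⟨Q, hQ, hcard⟩ := exists_subset_card_eq hle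
  have hburn := Containment.card_le_sn_add (G := G) (b := b) (v := v) (B := (Q : Set V)ᶜ) (τ := 0)
    (P := fun t => if t = 0 then Q else ∅) ⟨fun t => ?_, fun t x hx => ?_,
      fun hv => notMem_erase v _ (hQ hv), rfl, fun x _ y _ => ?_⟩
  · rw [← coe_compl, Set.ncard_coe_finset] at hburn
    have := card_add_card_compl Q
    omega
  · obtain rfl | ht := eq_or_ne t 0
    · simp [hcard]
    · simp [ht]
  · split_ifs at hx
    · simpa using hx
    · exact absurd hx (notMem_empty x)
  · by_cases hy : y ∈ Q
    · exact .inr ⟨0, Nat.zero_le _, by simpa using hy⟩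
    · exact .inl ⟨hy, Nat.zero_le _⟩

/-- The vertices that are reached from `v` without entering the barrier `W`. -/
def exposedSet (G : SimpleGraph V) (v : V) (W : Set V) : Set V :=
  {u | ReflTransGen (fun x y => G.Adj x y ∧ y ∉ W) v u}

/-- The fire reaches a vertex at distance `t + 1` after `t + 1` rounds at the earliest, which is
when it gets protected. -/
theorem card_le_sn_add_ncard_exposedSet [Fintype V] (hG : G.Connected) {W : Set V} (hv : v ∉ W)
    (hW : ∀ t, {w | w ∈ W ∧ G.dist v w = t + 1}.ncard ≤ b t) :
    Fintype.card V ≤ sn G b v + (exposedSet G v W).ncard := by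
  classical
  have hexposed : ∀ x ∈ exposedSet G v W, x ∉ W := fun x hx => by
    obtain rfl | ⟨y, -, -, hxW⟩ := hx.cases_tail
    exacts [hv, hxW]
  refine Containment.card_le_sn_add (τ := G.dist v)
    (P := fun t => {w | w ∈ W ∧ G.dist v w = t + 1}) ⟨fun t => ?_, fun t x hx hxB => ?_, .refl,
      G.dist_self, fun x hx y hxy => ?_⟩
  · rw [← Set.ncard_coe_finset]
    simpa using hW t
  · exact hexposed x hxB (mem_filter.1 hx).2.1
  · have hdist : G.dist v y ≤ G.dist v x + 1 := by
      have := hG.dist_triangle (u := v) (v := x) (w := y)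
      rwa [SimpleGraph.dist_eq_one_iff_adj.2 hxy] at this
    by_cases hyW : y ∈ W
    · have hpos : 0 < G.dist v y := hG.pos_dist_of_ne fun h => hv (h ▸ hyW)
      exact .inr ⟨G.dist v y - 1, by omega,
        mem_filter.2 ⟨mem_univ _, hyW, by omega⟩⟩
    · exact .inl ⟨.tail hx ⟨hxy, hyW⟩, hdist⟩

end Firefighting

section ShortestPaths

variable {V : Type*} {G : SimpleGraph V} {v : V} {f : V → V}

/-- `f` is the parent map of a breadth-first search tree of `G` rooted at `v`. -/
structure IsBFSParent (G : SimpleGraph V) (v : V) (f : V → V) : Prop where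
  root : f v = v
  adj : ∀ u, u ≠ v → G.Adj u (f u)
  dist : ∀ u, u ≠ v → G.dist v (f u) + 1 = G.dist v u

theorem exists_isBFSParent (hG : G.Connected) (v : V) : ∃ f, IsBFSParent G v f := by
  have hstep (u : V) (hu : u ≠ v) : ∃ w, G.Adj u w ∧ G.dist v w + 1 = G.dist v u := by
    obtain ⟨p, hp⟩ := hG.exists_walk_length_eq_dist u v
    cases p with
    | nil => exact absurd rfl hu
    | @cons _ w _ hadj p =>
      refine ⟨w, hadj, ?_⟩
      have hle := SimpleGraph.dist_le p
      have htri := hG.dist_triangle (u := u) (v := w) (w := v)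
      rw [SimpleGraph.dist_eq_one_iff_adj.2 hadj] at htri
      rw [SimpleGraph.Walk.length_cons] at hp
      rw [G.dist_comm (u := v), G.dist_comm (u := v)]
      omega
  classical
  choose! g hg using hstep
  refine ⟨fun u => if u = v then v else g u, if_pos rfl, fun u hu => ?_, fun u hu => ?_⟩ <;>
    simp only [if_neg hu, hg u hu]

/-- The vertices on the path from `a` to the root that follows the parent map `f`. -/
def ancestors (f : V → V) (a : V) : Set V := Set.range fun k => f^[k] a

theorem self_mem_ancestors (f : V → V) (a : V) : a ∈ ancestors f a := ⟨0, rfl⟩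

theorem apply_mem_ancestors {a u : V} (h : u ∈ ancestors f a) : f u ∈ ancestors f a := by
  obtain ⟨k, rfl⟩ := h
  exact ⟨k + 1, Function.iterate_succ_apply' f k a⟩

theorem IsBFSParent.dist_iterate (hf : IsBFSParent G v f) (a : V) (k : ℕ) :
    G.dist v (f^[k] a) = G.dist v a - k := by
  induction k generalizing a with
  | zero => rfl
  | succ k ih =>
    rw [Function.iterate_succ_apply, ih]
    by_cases ha : a = v
    · rw [ha, hf.root, G.dist_self, Nat.zero_sub, Nat.zero_sub]
    · have := hf.dist a ha
      omega

theorem IsBFSParent.root_mem_ancestors (hG : G.Connected) (hf : IsBFSParent G v f) (a : V) :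
    v ∈ ancestors f a := by
  refine ⟨G.dist v a, Eq.symm (hG.dist_eq_zero_iff.1 ?_)⟩
  rw [hf.dist_iterate, Nat.sub_self]

theorem IsBFSParent.injOn_dist_ancestors (hG : G.Connected) (hf : IsBFSParent G v f) (a : V) :
    Set.InjOn (G.dist v) (ancestors f a) := by
  rintro _ ⟨k, rfl⟩ _ ⟨l, rfl⟩ h
  simp only [hf.dist_iterate] at h
  obtain hlt | hge := lt_or_ge 0 (G.dist v a - k)
  · rw [show k = l by omega]
  · have hroot (m : ℕ) (hm : G.dist v a - m = 0) : f^[m] a = v :=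
      (hG.dist_eq_zero_iff.1 ((hf.dist_iterate a m).trans hm)).symm
    simp only [hroot k (by omega), hroot l (by omega)]

theorem IsBFSParent.ncard_ancestors_dist_le_one [Finite V] (hG : G.Connected)
    (hf : IsBFSParent G v f) (a : V) (d : ℕ) :
    {w | w ∈ ancestors f a ∧ G.dist v w = d}.ncard ≤ 1 :=
  Set.ncard_le_one_iff_subsingleton.2 fun _ hx _ hy =>
    hf.injOn_dist_ancestors hG a hx.1 hy.1 (hx.2.trans hy.2.symm)

/-- The union of two root paths of the breadth-first search tree. It meets every distance class in
at most two vertices, so two firefighters can occupy it ahead of the fire. -/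
def wall (f : V → V) (a c : V) : Set V := ancestors f a ∪ ancestors f c

theorem IsBFSParent.ncard_wall_dist_le_two [Finite V] (hG : G.Connected)
    (hf : IsBFSParent G v f) (a c : V) (d : ℕ) :
    {w | w ∈ wall f a c ∧ G.dist v w = d}.ncard ≤ 2 := by
  have hunion : {w | w ∈ wall f a c ∧ G.dist v w = d} =
      {w | w ∈ ancestors f a ∧ G.dist v w = d} ∪ {w | w ∈ ancestors f c ∧ G.dist v w = d} := by
    ext w
    exact or_and_right
  rw [hunion]
  exact (Set.ncard_union_le _ _).trans
    (add_le_add (hf.ncard_ancestors_dist_le_one hG a d) (hf.ncard_ancestors_dist_le_one hG c d))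

end ShortestPaths

theorem exists_superset_ncard_le_and_subsingleton_diff {α : Type*} [Finite α] {s t : Set α} {n : ℕ}
    (hst : s ⊆ t) (hs : s.ncard ≤ n) (ht : t.ncard ≤ n + 1) :
    ∃ r, s ⊆ r ∧ r ⊆ t ∧ r.ncard ≤ n ∧ (t \ r).Subsingleton := by
  by_cases h : t.ncard ≤ n
  · exact ⟨t, hst, subset_rfl, h, by simp⟩
  · obtain ⟨r, hsr, hrt, hr⟩ := Set.exists_subsuperset_card_eq hst hs (by omega : n ≤ t.ncard)
    refine ⟨r, hsr, hrt, hr.le, Set.ncard_le_one_iff_subsingleton.1 ?_⟩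
    have := Set.ncard_sdiff_add_ncard_of_subset hrt (Set.toFinite _)
    omega

section Wall

variable {V : Type*} [Finite V] {G : SimpleGraph V} {v : V} {f : V → V} {Z : Set V}

/-- Two firefighters occupy a wall ahead of the fire, and in the first round also all but one of
the at most three neighbours of `v` that matter. The fire is then confined to the part of the
graph that can be reached from the last neighbour `x` without crossing the wall. The set `Z`, which
is separated from the rest by `v`, is given up. -/
theorem IsBFSParent.exists_confined (hf : IsBFSParent G v f) (hG : G.Connected)
    (hZ : ∀ z ∈ Z, ∀ y, G.Adj z y → y ∈ Z ∨ y = v)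
    (hdeg : {w | G.Adj v w ∧ w ∉ Z}.ncard ≤ 3) (a c : V) :
    ∃ (x : V) (S : Set V), S.ncard ≤ sn G (fun _ => 2) v ∧
      ∀ u ∉ S, u ≠ v → u ∉ Z → u ∉ wall f a c ∧
        ReflTransGen (fun y w => G.Adj y w ∧ y ∉ wall f a c ∧ w ∉ wall f a c) x u := by
  cases nonempty_fintype V
  have hwall := hf.ncard_wall_dist_le_two hG a c
  obtain ⟨Q, hsub, hQ, hQcard, hexit⟩ := exists_superset_ncard_le_and_subsingleton_diff
    (s := {w | (w ∈ wall f a c ∧ G.dist v w = 0 + 1) ∧ w ∉ Z}) (t := {w | G.Adj v w ∧ w ∉ Z})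
    (fun w hw => ⟨SimpleGraph.dist_eq_one_iff_adj.1 hw.1.2, hw.2⟩)
    ((Set.ncard_le_ncard (Set.sep_subset _ _) (Set.toFinite _)).trans (hwall _)) hdeg
  obtain ⟨x, hx⟩ : ∃ x, ∀ w, G.Adj v w → w ∉ Z → w ∉ Q → w = x := by
    obtain hempty | ⟨x, hx⟩ := hexit.eq_empty_or_singleton
    · exact ⟨v, fun w hvw hwZ hwQ => (hempty.subset ⟨⟨hvw, hwZ⟩, hwQ⟩).elim⟩
    · exact ⟨x, fun w hvw hwZ hwQ => hx.subset ⟨⟨hvw, hwZ⟩, hwQ⟩⟩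
  let W : Set V := Q ∪ {w | w ∈ wall f a c ∧ w ∉ Z ∧ w ≠ v}
  have hvW : v ∉ W := by
    rintro (h | h)
    exacts [(hQ h).1.ne rfl, h.2.2 rfl]
  have hcount (t : ℕ) : {w | w ∈ W ∧ G.dist v w = t + 1}.ncard ≤ 2 := by
    cases t with
    | zero =>
      refine (Set.ncard_le_ncard ?_ (Set.toFinite _)).trans hQcard
      rintro w ⟨hw | ⟨hw, hwZ, -⟩, hdist⟩
      exacts [hw, hsub ⟨⟨hw, hdist⟩, hwZ⟩]
    | succ t =>
      refine (Set.ncard_le_ncard ?_ (Set.toFinite _)).trans (hwall (t + 1 + 1))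
      rintro w ⟨hw | hw, hdist⟩
      · rw [SimpleGraph.dist_eq_one_iff_adj.2 (hQ hw).1] at hdist
        omega
      · exact ⟨hw.1, hdist⟩
  refine ⟨x, (exposedSet G v W)ᶜ, ?_, fun u hu huv huZ => ?_⟩
  · have hcard := card_le_sn_add_ncard_exposedSet (b := fun _ => 2) hG hvW hcount
    have hsplit := Set.ncard_add_ncard_compl (exposedSet G v W)
    rw [Nat.card_eq_fintype_card] at hsplit
    omega
  · rw [Set.notMem_compl_iff] at hu
    induction hu with
    | refl => exact absurd rfl huv
    | @tail y w _ hyw ih =>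
      obtain ⟨hadj, hwW⟩ := hyw
      have hoff : w ∉ wall f a c := fun h => hwW (.inr ⟨h, huZ, huv⟩)
      refine ⟨hoff, ?_⟩
      by_cases hyv : y = v
      · rw [hx w (hyv ▸ hadj) huZ fun h => hwW (.inl h)]
      · have hyZ : y ∉ Z := fun h => (hZ y h w hadj).elim huZ huv
        exact (ih hyv hyZ).2.tail ⟨hadj, (ih hyv hyZ).1, hoff⟩

end Wall

section ConnectedSets

variable {α : Type*} {H : SimpleGraph α} {S T : Set α}

theorem induction_on_preconnected_induce (hT : (H.induce T).Preconnected) {P : α → Prop} {p q : α}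
    (hp : p ∈ T) (hq : q ∈ T) (hPp : P p)
    (hstep : ∀ x ∈ T, ∀ y ∈ T, H.Adj x y → P x → P y) : P q := by
  obtain ⟨w⟩ := hT ⟨p, hp⟩ ⟨q, hq⟩
  suffices ∀ x y : T, (H.induce T).Walk x y → P x → P y from this _ _ w hPp
  intro x y w hx
  induction w with
  | nil => exact hx
  | cons h _ ih => exact ih (hstep _ (Subtype.prop _) _ (Subtype.prop _) h hx)

theorem connected_induce_insert (hT : (H.induce T).Preconnected) {x y : α} (hx : x ∈ T)
    (hxy : H.Adj x y) : (H.induce (insert y T)).Connected := by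
  rw [Set.insert_eq, Set.union_comm]
  exact SimpleGraph.connected_induce_union hT .of_subsingleton hx rfl hxy

theorem exists_connected_induce_diff_adj (hT : (H.induce T).Preconnected) {p : α} (hp : p ∈ T)
    (hpS : p ∉ S) (hST : (T ∩ S).Nonempty) :
    ∃ C ⊆ T \ S, p ∈ C ∧ (H.induce C).Connected ∧ ∃ x ∈ C, ∃ y ∈ S, H.Adj x y := by
  obtain ⟨q, hqT, hqS⟩ := hST
  by_contra! h
  obtain ⟨C, hC, -, hqC, -⟩ :=
    induction_on_preconnected_induce (P := fun x => ∃ C ⊆ T \ S, p ∈ C ∧ x ∈ C ∧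
      (H.induce C).Connected) hT hp hqT
      ⟨{p}, by simp [hp, hpS], rfl, rfl, ⟨.of_subsingleton⟩⟩ fun x _ y hy hxy => by
        rintro ⟨C, hC, hpC, hxC, hconn⟩
        have hyS : y ∉ S := fun hyS => h C hC hpC hconn x hxC y hyS hxy
        exact ⟨insert y C, Set.insert_subset ⟨hy, hyS⟩ hC, .inr hpC, .inl rfl,
          connected_induce_insert hconn.preconnected hxC hxy⟩
  exact (hC hqC).2 hqS

/-- A family of disjoint connected vertex sets inside `T`. -/
structure IsConnectedPacking {K : Type*} (H : SimpleGraph α) (T : Set α) (c : K → Set α) :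
    Prop where
  subset : ∀ k, c k ⊆ T
  connected : ∀ k, (H.induce (c k)).Connected
  eq_of_mem : ∀ {k l p}, p ∈ c k → p ∈ c l → k = l

variable {K : Type*} {c : K → Set α}

theorem IsConnectedPacking.union_fiber (hc : IsConnectedPacking H T c) {k : K} {C : Set α}
    (hCT : C ⊆ T \ ⋃ k, c k) (hC : (H.induce C).Preconnected) {x y : α} (hx : x ∈ C)
    (hy : y ∈ c k) (hxy : H.Adj x y) :
    IsConnectedPacking H T fun l => {p | p ∈ c l ∨ p ∈ C ∧ l = k} := by
  have hCc {p : α} (hp : p ∈ C) (l : K) : p ∉ c l := fun h => (hCT hp).2 (Set.mem_iUnion_of_mem l h)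
  refine ⟨fun l => ?_, fun l => ?_, ?_⟩
  · rintro p (hp | ⟨hp, -⟩)
    exacts [hc.subset l hp, (hCT hp).1]
  · obtain rfl | hl := eq_or_ne l k
    · rw [show {p | p ∈ c l ∨ p ∈ C ∧ l = l} = c l ∪ C by ext; simp]
      exact SimpleGraph.connected_induce_union (hc.connected l).preconnected hC hy hx hxy.symm
    · rw [show {p | p ∈ c l ∨ p ∈ C ∧ l = k} = c l by ext; simp [hl]]
      exact hc.connected l
  · rintro l m p (hl | ⟨hl, rfl⟩) (hm | ⟨hm, rfl⟩)
    exacts [hc.eq_of_mem hl hm, absurd hl (hCc hm l), absurd hm (hCc hl m), rfl]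

variable [Nonempty K]

theorem IsConnectedPacking.exists_absorbing (hc : IsConnectedPacking H T c)
    (hT : (H.induce T).Preconnected) {F : Set α} (hF : (H.induce F).Connected)
    (hFT : F ⊆ T \ ⋃ k, c k) :
    ∃ (c' : K → Set α) (b : K), IsConnectedPacking H T c' ∧ (∀ k, c k ⊆ c' k) ∧ F ⊆ c' b := by
  obtain ⟨f, hf⟩ := hF.nonempty
  obtain ⟨q, hq⟩ := (hc.connected (Classical.arbitrary K)).nonempty
  obtain ⟨C, hCT, hfC, hC, x, hx, y, hy, hxy⟩ := exists_connected_induce_diff_adj hT (hFT hf).1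
    (hFT hf).2 ⟨q, hc.subset _ hq, Set.mem_iUnion_of_mem _ hq⟩
  obtain ⟨b, hyb⟩ := Set.mem_iUnion.1 hy
  exact ⟨_, b, hc.union_fiber (Set.union_subset hCT hFT)
    (SimpleGraph.induce_union_connected hC.preconnected hF.preconnected ⟨f, hfC, hf⟩).preconnected
    (.inl hx) hyb hxy, fun k p hp => .inl hp, fun p hp => .inr ⟨.inr hp, rfl⟩⟩

theorem IsConnectedPacking.exists_connected_fibers (hc : IsConnectedPacking H T c)
    (hfin : T.Finite) (hT : (H.induce T).Preconnected) :
    ∃ φ : α → K, (∀ k, ∀ p ∈ c k, φ p = k) ∧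
      ∀ k, (H.induce {p | p ∈ T ∧ φ p = k}).Connected := by
  induction hn : (T \ ⋃ k, c k).ncard using Nat.strong_induction_on generalizing c with
  | _ n ih =>
  by_cases hcover : T ⊆ ⋃ k, c k
  · have hcolor (p : α) : ∃ k, p ∈ T → p ∈ c k := by
      by_cases hp : p ∈ T
      · exact (Set.mem_iUnion.1 (hcover hp)).imp fun k hk _ => hk
      · exact ⟨Classical.arbitrary K, fun h => absurd h hp⟩
    choose φ hφ using hcolor
    have hfiber (k : K) : {p | p ∈ T ∧ φ p = k} = c k := by
      ext p
      exact ⟨fun h => h.2 ▸ hφ p h.1,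
        fun h => ⟨hc.subset k h, hc.eq_of_mem (hφ p (hc.subset k h)) h⟩⟩
    exact ⟨φ, fun k p hp => hc.eq_of_mem (hφ p (hc.subset k hp)) hp,
      fun k => hfiber k ▸ hc.connected k⟩
  · obtain ⟨q, hqT, hq⟩ := Set.not_subset.1 hcover
    obtain ⟨c', b, hc', hle, hqb⟩ := hc.exists_absorbing hT (F := {q}) ⟨.of_subsingleton⟩
      (Set.singleton_subset_iff.2 ⟨hqT, hq⟩)
    have hlt : (T \ ⋃ k, c' k).ncard < n := by
      rw [← hn]
      exact Set.ncard_lt_ncard ⟨Set.sdiff_subset_sdiff_right (Set.iUnion_mono hle),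
        fun h => (h ⟨hqT, hq⟩).2 (Set.mem_iUnion_of_mem b (hqb rfl))⟩
        (hfin.subset Set.sdiff_subset)
    obtain ⟨φ, hφ, hconn⟩ := ih _ hlt hc' rfl
    exact ⟨φ, fun k p hp => hφ k p (hle k hp), hconn⟩

end ConnectedSets

section RegionDrawing

variable {V α : Type*} {G : SimpleGraph V} {H : SimpleGraph α} {T : Set α} {R : V → Set α}
  {M : V → V → Set α}

/-- A drawing of `G` in `H` with thick vertices and edges: the vertex `u` is drawn as the region
`R u`, and the edge `uw` as a region `M u w` that meets the regions of its ends. -/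
structure RegionDrawing (G : SimpleGraph V) (H : SimpleGraph α) (T : Set α) (R : V → Set α)
    (M : V → V → Set α) : Prop where
  packing : IsConnectedPacking H T R
  edge_subset : ∀ {u w}, G.Adj u w → M u w ⊆ T
  edge_connected : ∀ {u w}, G.Adj u w → (H.induce (M u w)).Connected
  meet_left : ∀ {u w}, G.Adj u w → (M u w ∩ R u).Nonempty
  meet_right : ∀ {u w}, G.Adj u w → (M u w ∩ R w).Nonempty
  disjoint_vertex : ∀ {u w x}, G.Adj u w → x ≠ u → x ≠ w → Disjoint (M u w) (R x)
  disjoint_edge : ∀ {u w x y}, G.Adj u w → G.Adj x y → s(u, w) ≠ s(x, y) →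
    Disjoint (M u w) (M x y)

theorem RegionDrawing.exists_arms (hD : RegionDrawing G H T R M) :
    ∃ C : V → V → Set α, ∀ u w, G.Adj u w → C u w ⊆ M u w \ R w ∧ (C u w ∩ R u).Nonempty ∧
      (H.induce (C u w)).Connected ∧ ∃ x ∈ C u w, ∃ y ∈ R w, H.Adj x y := by
  have harm (u w : V) : ∃ C : Set α, G.Adj u w → C ⊆ M u w \ R w ∧ (C ∩ R u).Nonempty ∧
      (H.induce C).Connected ∧ ∃ x ∈ C, ∃ y ∈ R w, H.Adj x y := by
    by_cases huw : G.Adj u w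
    · obtain ⟨p, hpM, hpR⟩ := hD.meet_left huw
      obtain ⟨C, hC, hpC, hconn⟩ := exists_connected_induce_diff_adj
        (hD.edge_connected huw).preconnected hpM
        (fun h => huw.ne (hD.packing.eq_of_mem hpR h)) (hD.meet_right huw)
      exact ⟨C, fun _ => ⟨hC, ⟨p, hpC, hpR⟩, hconn⟩⟩
    · exact ⟨∅, fun h => absurd h huw⟩
  choose C hC using harm
  exact ⟨C, hC⟩

/-- Each edge region is given to its smaller end, up to where it meets the region of the larger
end. -/
theorem RegionDrawing.exists_packing [LinearOrder V] (hD : RegionDrawing G H T R M) :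
    ∃ c : V → Set α, IsConnectedPacking H T c ∧
      (∀ u, ∀ p ∈ c u, p ∈ R u ∨ ∃ w, G.Adj u w ∧ p ∈ M u w) ∧
      ∀ u w, G.Adj u w → ∃ x ∈ c u, ∃ y ∈ c w, H.Adj x y := by
  obtain ⟨C, hC⟩ := hD.exists_arms
  have hregion {u w l : V} {p : α} (hadj : G.Adj u w) (hp : p ∈ C u w) (hl : p ∈ R l) :
      u = l := by
    by_contra hne
    obtain ⟨hpM, hpw⟩ := (hC u w hadj).1 hp
    exact Set.disjoint_left.1 (hD.disjoint_vertex hadj (Ne.symm hne) fun h => hpw (h ▸ hl)) hpM hl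
  have harms {u w l z : V} {p : α} (hadj : G.Adj u w) (huw : u < w) (hp : p ∈ C u w)
      (hadj' : G.Adj l z) (hlz : l < z) (hp' : p ∈ C l z) : u = l := by
    by_contra hne
    refine Set.disjoint_left.1 (hD.disjoint_edge hadj hadj' fun h => ?_) ((hC u w hadj).1 hp).1
      ((hC l z hadj').1 hp').1
    obtain ⟨h, -⟩ | ⟨rfl, rfl⟩ := Sym2.eq_iff.1 h
    exacts [hne h, huw.asymm hlz]
  let c (u : V) : Set α := {p | p ∈ R u ∨ ∃ w, G.Adj u w ∧ u < w ∧ p ∈ C u w}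
  refine ⟨c, ⟨fun u => ?_, fun u => ?_, ?_⟩, fun u p hp => ?_,
    fun u w huw => ?_⟩
  · rintro p (hp | ⟨w, hadj, -, hp⟩)
    exacts [hD.packing.subset u hp, hD.edge_subset hadj ((hC u w hadj).1 hp).1]
  · have hR := hD.packing.connected u
    obtain ⟨r, hr⟩ := hR.nonempty
    refine SimpleGraph.induce_connected_of_patches r (.inl hr) fun {p} hp => ?_
    obtain hp | ⟨w, hadj, hlt, hp⟩ := hp
    · exact ⟨R u, fun _ => .inl, hr, hp, hR.preconnected _ _⟩
    · exact ⟨R u ∪ C u w, Set.union_subset (fun _ => .inl) fun q hq => .inr ⟨w, hadj, hlt, hq⟩,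
        .inl hr, .inr hp, SimpleGraph.induce_union_connected hR.preconnected
          (hC u w hadj).2.2.1.preconnected (Set.inter_comm _ _ ▸ (hC u w hadj).2.1) _ _⟩
  · rintro u l p (hu | ⟨w, hadj, huw, hp⟩) (hl | ⟨z, hadj', hlz, hp'⟩)
    exacts [hD.packing.eq_of_mem hu hl, (hregion hadj' hp' hu).symm, hregion hadj hp hl,
      harms hadj huw hp hadj' hlz hp']
  · exact hp.imp_right fun ⟨w, hadj, _, hp⟩ => ⟨w, hadj, ((hC u w hadj).1 hp).1⟩
  · obtain hlt | hlt := huw.ne.lt_or_gt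
    · obtain ⟨-, -, -, x, hx, y, hy, hxy⟩ := hC u w huw
      exact ⟨x, .inr ⟨w, huw, hlt, hx⟩, y, .inl hy, hxy⟩
    · obtain ⟨-, -, -, x, hx, y, hy, hxy⟩ := hC w u huw.symm
      exact ⟨y, .inl hy, x, .inr ⟨u, huw.symm, hlt, hx⟩, hxy.symm⟩

/-- A drawing of `G` with thick vertices and edges in `H` that misses the connected set `F` makes
`G` a minor of `H` with branch sets covering `T`, one of which contains `F`. -/
theorem RegionDrawing.exists_connected_fibers [Finite V] [Nonempty V]
    (hD : RegionDrawing G H T R M) (hfin : T.Finite) (hT : (H.induce T).Preconnected) {F : Set α}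
    (hF : (H.induce F).Connected) (hFT : F ⊆ T) (hFR : ∀ u, Disjoint F (R u))
    (hFM : ∀ u w, G.Adj u w → Disjoint F (M u w)) :
    ∃ (φ : α → V) (b : V), (∀ u, (H.induce {p | p ∈ T ∧ φ p = u}).Connected) ∧
      (∀ u w, G.Adj u w → ∃ p ∈ T, ∃ q ∈ T, H.Adj p q ∧ φ p = u ∧ φ q = w) ∧
      ∀ p ∈ F, φ p = b := by
  obtain ⟨n, ⟨e⟩⟩ := Finite.exists_equiv_fin V
  let : LinearOrder V := LinearOrder.lift' e e.injective
  obtain ⟨c, hc, hcRM, hadj⟩ := hD.exists_packing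
  have hFc : F ⊆ T \ ⋃ u, c u := fun p hp => ⟨hFT hp, fun h => by
    obtain ⟨u, hu⟩ := Set.mem_iUnion.1 h
    obtain hu | ⟨w, huw, hu⟩ := hcRM u p hu
    exacts [Set.disjoint_left.1 (hFR u) hp hu, Set.disjoint_left.1 (hFM u w huw) hp hu]⟩
  obtain ⟨c', b, hc', hle, hFb⟩ := hc.exists_absorbing hT hF hFc
  obtain ⟨φ, hφ, hconn⟩ := hc'.exists_connected_fibers hfin hT
  refine ⟨φ, b, hconn, fun u w huw => ?_, fun p hp => hφ b p (hFb hp)⟩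
  obtain ⟨x, hx, y, hy, hxy⟩ := hadj u w huw
  exact ⟨x, hc.subset u hx, y, hc.subset w hy, hxy, hφ u x (hle u hx), hφ w y (hle w hy)⟩

end RegionDrawing

section Grid

/-- The infinite square grid on the points with natural coordinates. -/
def gridGraph : SimpleGraph (ℕ × ℕ) :=
  SimpleGraph.boxProd (SimpleGraph.hasse ℕ) (SimpleGraph.hasse ℕ)

theorem gridGraph_adj {p q : ℕ × ℕ} : gridGraph.Adj p q ↔
    q = (p.1 + 1, p.2) ∨ q = (p.1, p.2 + 1) ∨ p = (q.1 + 1, q.2) ∨ p = (q.1, q.2 + 1) := by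
  simp only [gridGraph, SimpleGraph.boxProd_adj, SimpleGraph.hasse_adj, Order.covBy_iff_add_one_eq,
    Prod.ext_iff]
  omega

/-- The `N × N` square of grid points with coordinates from `1` to `N`. -/
def gridBox (N : ℕ) : Finset (ℕ × ℕ) := Icc 1 N ×ˢ Icc 1 N

theorem mem_gridBox {N : ℕ} {p : ℕ × ℕ} :
    p ∈ gridBox N ↔ (1 ≤ p.1 ∧ p.1 ≤ N) ∧ 1 ≤ p.2 ∧ p.2 ≤ N := by
  simp [gridBox]

/-- The boundary points of `gridBox N`. -/
def gridFrame (N : ℕ) : Set (ℕ × ℕ) :=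
  {p | p ∈ gridBox N ∧ (p.1 = 1 ∨ p.1 = N ∨ p.2 = 1 ∨ p.2 = N)}

theorem preconnected_induce_hasse {I : Set ℕ} (hI : I.OrdConnected) :
    ((SimpleGraph.hasse ℕ).induce I).Preconnected := by
  refine (SimpleGraph.hasse_preconnected_of_succ I).mono fun x y hxy => ?_
  have hrange : (Set.range (OrderEmbedding.subtype (· ∈ I))).OrdConnected := by
    rwa [OrderEmbedding.coe_subtype, Subtype.range_val]
  exact hxy.imp (fun h => h.image _ hrange) fun h => h.image _ hrange

theorem preconnected_induce_gridGraph_prod {I J : Set ℕ} (hI : I.OrdConnected)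
    (hJ : J.OrdConnected) : (gridGraph.induce (I ×ˢ J)).Preconnected := by
  have h := (preconnected_induce_hasse hI).boxProd (preconnected_induce_hasse hJ)
  rintro ⟨p, hp⟩ ⟨q, hq⟩
  refine (h (⟨p.1, hp.1⟩, ⟨p.2, hp.2⟩) (⟨q.1, hq.1⟩, ⟨q.2, hq.2⟩)).map
    (G' := gridGraph.induce (I ×ˢ J)) ⟨fun x => ⟨(x.1, x.2), x.1.2, x.2.2⟩, ?_⟩
  simp [gridGraph, SimpleGraph.boxProd_adj]

theorem connected_induce_gridFrame {N : ℕ} (hN : 1 ≤ N) :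
    (gridGraph.induce (gridFrame N)).Connected := by
  have hor (j : ℕ) := preconnected_induce_gridGraph_prod (Set.ordConnected_Icc (a := 1) (b := N))
    (Set.ordConnected_singleton (a := j))
  have ver (i : ℕ) := preconnected_induce_gridGraph_prod (Set.ordConnected_singleton (a := i))
    (Set.ordConnected_Icc (a := 1) (b := N))
  have hLB := SimpleGraph.induce_union_connected (ver 1) (hor 1) ⟨(1, 1), by simp [hN]⟩
  have hLBR := SimpleGraph.induce_union_connected hLB.preconnected (ver N) ⟨(N, 1), by simp [hN]⟩
  have hframe := SimpleGraph.induce_union_connected hLBR.preconnected (hor N) ⟨(1, N), by simp [hN]⟩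
  have hsides : gridFrame N = ({1} ×ˢ Set.Icc 1 N ∪ Set.Icc 1 N ×ˢ {1} ∪ {N} ×ˢ Set.Icc 1 N) ∪
      Set.Icc 1 N ×ˢ {N} := by
    ext ⟨i, j⟩
    simp only [gridFrame, mem_gridBox, Set.mem_union, Set.mem_prod, Set.mem_ofPred_eq,
      Set.mem_Icc, Set.mem_singleton_iff]
    omega
  rwa [hsides]

/-- `G` as a minor of the box of side `N` in the grid, with branch sets that partition the box:
the points of colour `u` form the branch set of `u`, and the boundary of the box is contained in
the branch set of `b`. -/
structure GridColoring {V : Type*} (G : SimpleGraph V) (N : ℕ) (φ : ℕ × ℕ → V) (b : V) :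
    Prop where
  connected : ∀ u, (gridGraph.induce {p | p ∈ gridBox N ∧ φ p = u}).Connected
  adj : ∀ u w, G.Adj u w →
    ∃ p ∈ gridBox N, ∃ q ∈ gridBox N, gridGraph.Adj p q ∧ φ p = u ∧ φ q = w
  frame : ∀ p ∈ gridFrame N, φ p = b

end Grid

section Discretization

/-- The point of the plane that the grid point `p` stands for, in a grid of mesh `h` with lower left
corner `(-L, -L)`. -/
noncomputable def gridPoint (h L : ℝ) : ℕ × ℕ → ℝ × ℝ :=
  Prod.map (fun i => h * i - L) (fun i => h * i - L)

/-- The grid points at distance less than `δ` from `T`. -/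
def gridCells (h L δ : ℝ) (T : Set (ℝ × ℝ)) : Set (ℕ × ℕ) :=
  gridPoint h L ⁻¹' Metric.thickening δ T

variable {h L δ : ℝ}

theorem mem_gridCells_singleton {z : ℝ × ℝ} {p : ℕ × ℕ} :
    p ∈ gridCells h L δ {z} ↔ dist (gridPoint h L p) z < δ := by
  rw [gridCells, Metric.thickening_singleton, Set.mem_preimage, Metric.mem_ball]

theorem gridCells_mono {S T : Set (ℝ × ℝ)} (hST : S ⊆ T) : gridCells h L δ S ⊆ gridCells h L δ T :=
  Set.preimage_mono (Metric.thickening_subset_of_subset δ hST)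

theorem preconnected_induce_gridCells_singleton (hh : 0 ≤ h) (z : ℝ × ℝ) :
    (gridGraph.induce (gridCells h L δ {z})).Preconnected := by
  have hmono : Monotone fun i : ℕ => h * i - L := fun i j hij => by
    dsimp only
    gcongr
  rw [gridCells, Metric.thickening_singleton, ← ball_prod_same, gridPoint,
    Set.preimage_prod_map_prod]
  apply preconnected_induce_gridGraph_prod <;> rw [Real.ball_eq_Ioo]
  exacts [Set.ordConnected_Ioo.preimage_mono hmono, Set.ordConnected_Ioo.preimage_mono hmono]

theorem gridCells_singleton_nonempty (hh : 0 < h) (hδ : h < δ) {z : ℝ × ℝ} (h1 : -L ≤ z.1)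
    (h2 : -L ≤ z.2) : (gridCells h L δ {z}).Nonempty := by
  have hclose (c : ℝ) (hc : -L ≤ c) : dist (h * ⌊(c + L) / h⌋₊ - L) c < δ := by
    have hle := Nat.floor_le (div_nonneg (by linarith : 0 ≤ c + L) hh.le)
    have hlt := Nat.lt_floor_add_one ((c + L) / h)
    rw [le_div_iff₀ hh] at hle
    rw [div_lt_iff₀ hh] at hlt
    rw [Real.dist_eq, abs_lt]
    constructor <;> nlinarith
  refine ⟨(⌊(z.1 + L) / h⌋₊, ⌊(z.2 + L) / h⌋₊), ?_⟩
  rw [gridCells, Metric.thickening_singleton, ← ball_prod_same]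
  exact ⟨hclose _ h1, hclose _ h2⟩

theorem connected_induce_gridCells (hh : 0 < h) (hδ : h < δ) {T : Set (ℝ × ℝ)}
    (hT : IsConnected T) (hL : ∀ z ∈ T, -L ≤ z.1 ∧ -L ≤ z.2) :
    (gridGraph.induce (gridCells h L δ T)).Connected := by
  have hball {z : ℝ × ℝ} (hz : z ∈ T) : (gridCells h L δ {z}).Nonempty :=
    gridCells_singleton_nonempty hh hδ (hL z hz).1 (hL z hz).2
  have hcells {z : ℝ × ℝ} (hz : z ∈ T) : gridCells h L δ {z} ⊆ gridCells h L δ T :=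
    gridCells_mono (Set.singleton_subset_iff.2 hz)
  have hjoin {x y : ℝ × ℝ} (hx : x ∈ T) (hy : y ∈ T) : ∃ S ⊆ gridCells h L δ T,
      (gridGraph.induce S).Connected ∧ gridCells h L δ {x} ⊆ S ∧ gridCells h L δ {y} ⊆ S := by
    refine hT.isPreconnected.induction₂ (fun x y => ∃ S ⊆ gridCells h L δ T,
      (gridGraph.induce S).Connected ∧ gridCells h L δ {x} ⊆ S ∧ gridCells h L δ {y} ⊆ S)
      (fun x hx => ?_) ?_ ?_ hx hy
    · obtain ⟨p, hp⟩ := hball hx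
      have hnear : ∀ᶠ y in nhds x, p ∈ gridCells h L δ {y} := by
        simp only [mem_gridCells_singleton] at hp ⊢
        exact (isOpen_lt (continuous_const.dist continuous_id) continuous_const).mem_nhds hp
      filter_upwards [hnear.filter_mono nhdsWithin_le_nhds, self_mem_nhdsWithin] with y hy hyT
      exact ⟨_, Set.union_subset (hcells hx) (hcells hyT), SimpleGraph.induce_union_connected
        (preconnected_induce_gridCells_singleton hh.le x)
        (preconnected_induce_gridCells_singleton hh.le y) ⟨p, hp, hy⟩,
        Set.subset_union_left, Set.subset_union_right⟩
    · rintro x y z - hy - ⟨S, hS, hSconn, hxS, hyS⟩ ⟨S', hS', hSconn', hyS', hzS'⟩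
      exact ⟨S ∪ S', Set.union_subset hS hS', SimpleGraph.induce_union_connected
        hSconn.preconnected hSconn'.preconnected ((hball hy).mono (Set.subset_inter hyS hyS')),
        hxS.trans Set.subset_union_left, hzS'.trans Set.subset_union_right⟩
    · rintro x y - - ⟨S, hS, hconn, hx, hy⟩
      exact ⟨S, hS, hconn, hy, hx⟩
  obtain ⟨z, hz⟩ := hT.nonempty
  obtain ⟨p, hp⟩ := hball hz
  refine SimpleGraph.induce_connected_of_patches p (hcells hz hp) fun {q} hq => ?_
  obtain ⟨y, hy, hqy⟩ := Metric.mem_thickening_iff.1 hq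
  obtain ⟨S, hS, hconn, hzS, hyS⟩ := hjoin hz hy
  exact ⟨S, hS, hzS hp, hyS (mem_gridCells_singleton.2 hqy), hconn.preconnected _ _⟩

theorem gridCells_subset_interior {r : ℝ} {N : ℕ} {T : Set (ℝ × ℝ)} (hh : 0 < h)
    (hr : ∀ z ∈ T, ‖z‖ ≤ r) (hL : h + r + δ ≤ L) (hN : L + r + δ ≤ h * N) :
    gridCells h L δ T ⊆ gridBox N \ gridFrame N := by
  have hcoord {c : ℝ} {i : ℕ} (hc : ‖c‖ ≤ r) (hi : dist (h * i - L) c < δ) : 1 < i ∧ i < N := by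
    rw [Real.norm_eq_abs, abs_le] at hc
    rw [Real.dist_eq, abs_lt] at hi
    have hlow : h * 1 < h * i := by linarith
    have hupp : h * i < h * N := by linarith
    exact ⟨by exact_mod_cast lt_of_mul_lt_mul_left hlow hh.le,
      by exact_mod_cast lt_of_mul_lt_mul_left hupp hh.le⟩
  intro p hp
  obtain ⟨z, hz, hpz⟩ := Metric.mem_thickening_iff.1 hp
  rw [Prod.dist_eq, max_lt_iff] at hpz
  have h1 := hcoord ((norm_fst_le z).trans (hr z hz)) hpz.1
  have h2 := hcoord ((norm_snd_le z).trans (hr z hz)) hpz.2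
  simp only [gridFrame, Set.mem_sdiff, mem_coe, mem_gridBox, Set.mem_ofPred_eq]
  omega

theorem exists_pos_forall_disjoint_thickening {α ι : Type*} [PseudoEMetricSpace α] [Finite ι]
    {A B : ι → Set α} (hA : ∀ i, IsCompact (A i)) (hB : ∀ i, IsClosed (B i))
    (hAB : ∀ i, Disjoint (A i) (B i)) :
    ∃ δ > 0, ∀ i, Disjoint (Metric.thickening δ (A i)) (Metric.thickening δ (B i)) := by
  have hsmall (i : ι) : ∀ᶠ δ in nhdsWithin (0 : ℝ) (Set.Ioi 0),
      Disjoint (Metric.thickening δ (A i)) (Metric.thickening δ (B i)) := by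
    obtain ⟨δ, hδ, hdisj⟩ := (hAB i).exists_thickenings (hA i) (hB i)
    filter_upwards [Ioo_mem_nhdsGT hδ] with x hx
    exact hdisj.mono (Metric.thickening_mono hx.2.le _) (Metric.thickening_mono hx.2.le _)
  obtain ⟨δ, hdisj, hδ⟩ := ((Filter.eventually_all.2 hsmall).and self_mem_nhdsWithin).exists
  exact ⟨δ, hδ, hdisj⟩

theorem exists_grid_discretization {ι : Type*} [Finite ι] {C : ι → Set (ℝ × ℝ)}
    (hC : ∀ i, IsCompact (C i)) (hconn : ∀ i, IsConnected (C i)) :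
    ∃ (N : ℕ) (D : ι → Set (ℕ × ℕ)), 1 ≤ N ∧ (∀ i, D i ⊆ gridBox N \ gridFrame N) ∧
      (∀ i, (gridGraph.induce (D i)).Connected) ∧
      (∀ i j, Disjoint (C i) (C j) → Disjoint (D i) (D j)) ∧
      ∀ i j, (C i ∩ C j).Nonempty → (D i ∩ D j).Nonempty := by
  obtain ⟨δ, hδ, hthick⟩ := exists_pos_forall_disjoint_thickening
    (ι := {e : ι × ι // Disjoint (C e.1) (C e.2)}) (fun e => hC e.1.1)
    (fun e => (hC e.1.2).isClosed) (fun e => e.2)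
  obtain ⟨r, hr⟩ := (isCompact_iUnion hC).isBounded.exists_norm_le
  replace hr (i : ι) : ∀ z ∈ C i, ‖z‖ ≤ r := fun z hz => hr z (Set.mem_iUnion.2 ⟨i, hz⟩)
  set h := δ / 2 with hh
  set L := r + 2 * δ
  have hh0 : 0 < h := by positivity
  have hhδ : h < δ := by linarith
  have hlow (i : ι) : ∀ z ∈ C i, -L ≤ z.1 ∧ -L ≤ z.2 := fun z hz => by
    have h1 := abs_le.1 ((norm_fst_le z).trans (hr i z hz))
    have h2 := abs_le.1 ((norm_snd_le z).trans (hr i z hz))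
    constructor <;> linarith
  obtain ⟨N, hN⟩ := exists_nat_ge (max 1 ((L + r + δ) / h))
  rw [max_le_iff, div_le_iff₀' hh0] at hN
  refine ⟨N, fun i => gridCells h L δ (C i), by exact_mod_cast hN.1,
    fun i => gridCells_subset_interior hh0 (hr i) (by linarith) hN.2,
    fun i => connected_induce_gridCells hh0 hhδ (hconn i) (hlow i),
    fun i j hij => (hthick ⟨(i, j), hij⟩).preimage _, ?_⟩
  rintro i j ⟨z, hi, hj⟩
  exact (gridCells_singleton_nonempty hh0 hhδ (hlow i z hi).1 (hlow i z hi).2).mono <|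
    Set.subset_inter (gridCells_mono (Set.singleton_subset_iff.2 hi))
      (gridCells_mono (Set.singleton_subset_iff.2 hj))

end Discretization

section Planar

variable {V : Type*} {G : SimpleGraph V} {u v w x y : V}

theorem arc_eq_arc (E : PlaneEmbedding G) (huv : G.Adj u v) (hxy : G.Adj x y) {s t : ℝ}
    (ht : t ∈ Set.Ioo 0 1) (hs : s ∈ Set.Ioo 0 1) (h : E.arc u v t = E.arc x y s) :
    (u = x ∧ v = y ∧ t = s) ∨ (u = y ∧ v = x ∧ t = 1 - s) := by
  have hti := Set.Ioo_subset_Icc_self ht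
  have hsi := Set.Ioo_subset_Icc_self hs
  by_cases he : s(u, v) = s(x, y)
  · rcases Sym2.eq_iff.1 he with ⟨rfl, rfl⟩ | ⟨rfl, rfl⟩
    · exact Or.inl ⟨rfl, rfl, E.arc_injOn huv hti hsi h⟩
    · rw [E.arc_symm huv] at h
      exact Or.inr ⟨rfl, rfl, E.arc_injOn huv hti (Set.Icc.mem_iff_one_sub_mem.1 hsi) h⟩
  · rcases (E.arc_meet huv hxy he ⟨⟨t, hti, rfl⟩, s, hsi, h.symm⟩).1 with hpos | hpos
    · exact (E.arc_avoid huv u ⟨t, ht, hpos⟩).elim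
    · exact (E.arc_avoid huv v ⟨t, ht, hpos⟩).elim

/-- The point of `v` together with the first third of every arc that leaves it. -/
def vertexStar (E : PlaneEmbedding G) (v : V) : Set (ℝ × ℝ) :=
  {E.pos v} ∪ ⋃ u, ⋃ _ : G.Adj v u, E.arc v u '' Set.Icc 0 (1 / 3)

/-- The middle third of the arc from `u` to `v`. -/
def middleArc (E : PlaneEmbedding G) (u v : V) : Set (ℝ × ℝ) :=
  E.arc u v '' Set.Icc (1 / 3) (2 / 3)

theorem mem_vertexStar (E : PlaneEmbedding G) {z : ℝ × ℝ} : z ∈ vertexStar E v ↔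
    z = E.pos v ∨ ∃ u, G.Adj v u ∧ ∃ t ∈ Set.Ioc (0 : ℝ) (1 / 3), E.arc v u t = z := by
  simp only [vertexStar, Set.mem_union, Set.mem_singleton_iff, Set.mem_iUnion]
  refine or_congr_right' fun hz => ?_
  constructor
  · rintro ⟨u, hu, t, ht, rfl⟩
    refine ⟨u, hu, t, ⟨ht.1.lt_of_ne ?_, ht.2⟩, rfl⟩
    rintro rfl
    exact hz (E.arc_zero hu)
  · rintro ⟨u, hu, t, ht, rfl⟩
    exact ⟨u, hu, t, Set.Ioc_subset_Icc_self ht, rfl⟩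

theorem isCompact_vertexStar [Finite V] (E : PlaneEmbedding G) (v : V) :
    IsCompact (vertexStar E v) :=
  isCompact_singleton.union <| isCompact_iUnion fun _ => isCompact_iUnion fun h =>
    isCompact_Icc.image (E.arc_cont h)

theorem isConnected_vertexStar (E : PlaneEmbedding G) (v : V) : IsConnected (vertexStar E v) := by
  refine ⟨⟨E.pos v, Or.inl rfl⟩, isPreconnected_of_forall (E.pos v) ?_⟩
  rintro z (hz | hz)
  · exact ⟨{E.pos v}, Set.subset_union_left, rfl, hz, isPreconnected_singleton⟩
  · obtain ⟨u, hu, hzu⟩ := Set.mem_iUnion₂.1 hz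
    exact ⟨_, (Set.subset_iUnion₂ u hu).trans Set.subset_union_right,
      ⟨0, by norm_num, E.arc_zero hu⟩, hzu, isPreconnected_Icc.image _ (E.arc_cont hu).continuousOn⟩

theorem disjoint_vertexStar (E : PlaneEmbedding G) (huv : u ≠ v) :
    Disjoint (vertexStar E u) (vertexStar E v) := by
  rw [Set.disjoint_left]
  intro z hzu hzv
  rcases (mem_vertexStar E).1 hzu with rfl | ⟨x, hx, t, ht, rfl⟩ <;>
    rcases (mem_vertexStar E).1 hzv with h | ⟨y, hy, s, hs, h⟩
  · exact huv (E.pos_inj h)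
  · exact E.arc_avoid hy u ⟨s, ⟨hs.1, by linarith [hs.2]⟩, h⟩
  · exact E.arc_avoid hx v ⟨t, ⟨ht.1, by linarith [ht.2]⟩, h⟩
  · rcases arc_eq_arc E hx hy ⟨ht.1, by linarith [ht.2]⟩ ⟨hs.1, by linarith [hs.2]⟩ h.symm with
      ⟨hux, -, -⟩ | ⟨-, -, hts⟩
    · exact huv hux
    · linarith [ht.2, hs.2]

theorem disjoint_middleArc_vertexStar (E : PlaneEmbedding G) (huv : G.Adj u v) (hu : w ≠ u)
    (hv : w ≠ v) : Disjoint (middleArc E u v) (vertexStar E w) := by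
  rw [Set.disjoint_left]
  rintro _ ⟨t, ht, rfl⟩ hz
  have ht' : t ∈ Set.Ioo (0 : ℝ) 1 := ⟨by linarith [ht.1], by linarith [ht.2]⟩
  rcases (mem_vertexStar E).1 hz with h | ⟨y, hy, s, hs, h⟩
  · exact E.arc_avoid huv w ⟨t, ht', h⟩
  · rcases arc_eq_arc E huv hy ht' ⟨hs.1, by linarith [hs.2]⟩ h.symm with ⟨h, -, -⟩ | ⟨-, h, -⟩
    · exact hu h.symm
    · exact hv h.symm

theorem disjoint_middleArc (E : PlaneEmbedding G) (huv : G.Adj u v) (hxy : G.Adj x y)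
    (hne : s(u, v) ≠ s(x, y)) : Disjoint (middleArc E u v) (middleArc E x y) := by
  rw [Set.disjoint_left]
  rintro _ ⟨t, ht, rfl⟩ ⟨s, hs, h⟩
  rcases arc_eq_arc E huv hxy ⟨by linarith [ht.1], by linarith [ht.2]⟩
    ⟨by linarith [hs.1], by linarith [hs.2]⟩ h.symm with ⟨rfl, rfl, -⟩ | ⟨rfl, rfl, -⟩
  · exact hne rfl
  · exact hne Sym2.eq_swap

theorem middleArc_inter_vertexStar_left (E : PlaneEmbedding G) (huv : G.Adj u v) :
    (middleArc E u v ∩ vertexStar E u).Nonempty :=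
  ⟨E.arc u v (1 / 3), ⟨1 / 3, by norm_num, rfl⟩,
    (mem_vertexStar E).2 (Or.inr ⟨v, huv, 1 / 3, by norm_num, rfl⟩)⟩

theorem middleArc_inter_vertexStar_right (E : PlaneEmbedding G) (huv : G.Adj u v) :
    (middleArc E u v ∩ vertexStar E v).Nonempty := by
  refine ⟨E.arc u v (2 / 3), ⟨2 / 3, by norm_num, rfl⟩,
    (mem_vertexStar E).2 (Or.inr ⟨u, huv.symm, 1 / 3, by norm_num, ?_⟩)⟩
  rw [E.arc_symm huv]
  norm_num

theorem IsPlanar.exists_gridColoring [Finite V] [Nonempty V] (hG : IsPlanar G) :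
    ∃ N φ b, GridColoring G N φ b := by
  obtain ⟨E⟩ := hG
  let C : V ⊕ {e : V × V // G.Adj e.1 e.2} → Set (ℝ × ℝ) :=
    Sum.elim (vertexStar E) fun e => middleArc E e.1.1 e.1.2
  have hcompact : ∀ k, IsCompact (C k)
    | .inl v => isCompact_vertexStar E v
    | .inr e => isCompact_Icc.image (E.arc_cont e.2)
  have hconn : ∀ k, IsConnected (C k)
    | .inl v => isConnected_vertexStar E v
    | .inr e => ((isConnected_Icc (by norm_num)).image _ (E.arc_cont e.2).continuousOn)
  obtain ⟨N, D, hN, hDsub, hDconn, hDdisj, hDmeet⟩ := exists_grid_discretization hcompact hconn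
  classical
  let R (u : V) : Set (ℕ × ℕ) := D (.inl u)
  let M (u w : V) : Set (ℕ × ℕ) := if h : G.Adj u w then D (.inr ⟨(u, w), h⟩) else ∅
  have hM {u w : V} (h : G.Adj u w) : M u w = D (.inr ⟨(u, w), h⟩) := dif_pos h
  have hdrawing : RegionDrawing G gridGraph (gridBox N : Set (ℕ × ℕ)) R M :=
    { packing :=
        { subset := fun u => (hDsub _).trans Set.sdiff_subset
          connected := fun u => hDconn _
          eq_of_mem := fun hpu hpw => by
            by_contra hne
            have hdisj := hDdisj (.inl _) (.inl _) (disjoint_vertexStar E hne)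
            exact Set.disjoint_left.1 hdisj hpu hpw }
      edge_subset := fun h => hM h ▸ (hDsub _).trans Set.sdiff_subset
      edge_connected := fun h => hM h ▸ hDconn _
      meet_left := fun h => hM h ▸ hDmeet _ _ (middleArc_inter_vertexStar_left E h)
      meet_right := fun h => hM h ▸ hDmeet _ _ (middleArc_inter_vertexStar_right E h)
      disjoint_vertex := fun h hu hw =>
        hM h ▸ hDdisj _ _ (disjoint_middleArc_vertexStar E h hu hw)
      disjoint_edge := fun h h' hne => by
        rw [hM h, hM h']
        exact hDdisj _ _ (disjoint_middleArc E h h' hne) }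
  have hframe (k) : Disjoint (gridFrame N) (D k) :=
    (Set.disjoint_sdiff_left.mono_left (hDsub k)).symm
  have hbox : (gridGraph.induce (gridBox N : Set (ℕ × ℕ))).Preconnected := by
    rw [gridBox, coe_product, coe_Icc]
    exact preconnected_induce_gridGraph_prod Set.ordConnected_Icc Set.ordConnected_Icc
  obtain ⟨φ, b, hfiber, hadj, hb⟩ := hdrawing.exists_connected_fibers (gridBox N).finite_toSet
    hbox (connected_induce_gridFrame hN) (fun p hp => hp.1) (fun u => hframe _)
    (fun u w h => hM h ▸ hframe _)
  exact ⟨N, φ, b, hfiber, hadj, hb⟩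

end Planar

section Cycles

variable {α : Type*}

/-- `par` maps every element of `B` to its parent in a tree on `B` with root `r`, and `depth` is the
distance to the root. -/
structure IsRootedTree (B : Set α) (r : α) (par : α → α) (depth : α → ℕ) : Prop where
  root_mem : r ∈ B
  depth_root : depth r = 0
  par_mem : ∀ {q}, q ∈ B → q ≠ r → par q ∈ B
  depth_par : ∀ {q}, q ∈ B → q ≠ r → depth (par q) + 1 = depth q

theorem exists_isRootedTree (R : α → α → Prop) (r : α) :
    ∃ par depth, IsRootedTree {q | ReflTransGen R r q} r par depth ∧
      ∀ q, ReflTransGen R r q → q ≠ r → R (par q) q := by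
  classical
  let level (n : ℕ) : Set α := (fun X => {y | ∃ x ∈ X, R x y})^[n] {r}
  have hlevel {n : ℕ} {y : α} : y ∈ level (n + 1) ↔ ∃ x ∈ level n, R x y := by
    simp only [level, Function.iterate_succ_apply', Set.mem_ofPred_eq]
  have hreach {n : ℕ} {q : α} (hq : q ∈ level n) : ReflTransGen R r q := by
    induction n generalizing q with
    | zero => exact hq ▸ .refl
    | succ n ih =>
      obtain ⟨x, hx, hxq⟩ := hlevel.1 hq
      exact (ih hx).tail hxq
  have hex (q : α) (hq : ReflTransGen R r q) : ∃ n, q ∈ level n := by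
    induction hq with
    | refl => exact ⟨0, rfl⟩
    | tail _ hxy ih => exact ih.imp' (· + 1) fun n hn => hlevel.2 ⟨_, hn, hxy⟩
  let depth (q : α) : ℕ := sInf {n | q ∈ level n}
  have hpar (q : α) : ∃ p, ReflTransGen R r q → q ≠ r →
      ReflTransGen R r p ∧ R p q ∧ depth p + 1 = depth q := by
    by_cases hq : ReflTransGen R r q ∧ q ≠ r
    · have hmem : q ∈ level (depth q) := Nat.sInf_mem (hex q hq.1)
      obtain ⟨n, hn⟩ : ∃ n, depth q = n + 1 :=
        Nat.exists_eq_succ_of_ne_zero fun h0 => hq.2 (by rwa [h0] at hmem)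
      obtain ⟨p, hp, hpq⟩ := hlevel.1 (hn ▸ hmem)
      refine ⟨p, fun _ _ => ⟨hreach hp, hpq, ?_⟩⟩
      have hle : depth p ≤ n := Nat.sInf_le hp
      have hge : depth q ≤ depth p + 1 :=
        Nat.sInf_le (hlevel.2 ⟨p, Nat.sInf_mem (hex p (hreach hp)), hpq⟩)
      omega
    · exact ⟨q, fun h1 h2 => (hq ⟨h1, h2⟩).elim⟩
  choose par hpar using hpar
  have hroot : depth r = 0 := Nat.le_zero.1 (Nat.sInf_le rfl)
  exact ⟨par, depth, ⟨.refl, hroot, fun hq hr => (hpar _ hq hr).1,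
    fun hq hr => (hpar _ hq hr).2.2⟩, fun q hq hr => (hpar q hq hr).2.1⟩

variable {B : Set α} {r : α} {par : α → α} {depth : α → ℕ} {w w' : α → α → ZMod 2} {p q : α}

theorem IsRootedTree.induction (ht : IsRootedTree B r par depth) {P : α → Prop} (hr : P r)
    (hpar : ∀ q ∈ B, q ≠ r → P (par q) → P q) (hq : q ∈ B) : P q := by
  induction h : depth q generalizing q with
  | zero =>
    by_cases hqr : q = r
    · exact hqr ▸ hr
    · have := ht.depth_par hq hqr
      omega
  | succ n ih =>
    by_cases hqr : q = r
    · exact hqr ▸ hr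
    · exact hpar q hq hqr (ih (ht.par_mem hq hqr) (by have := ht.depth_par hq hqr; omega))

/-- The sum of the weights `w` along the tree path from `q` to the root. -/
def pathSum (par : α → α) (depth : α → ℕ) (w : α → α → ZMod 2) (q : α) : ZMod 2 :=
  ∑ k ∈ range (depth q), w (par^[k] q) (par^[k + 1] q)

/-- The sum of the weights `w` along the closed walk formed by the edge `pq` and the tree paths from
its ends to the root. -/
def cycleSum (par : α → α) (depth : α → ℕ) (w : α → α → ZMod 2) (p q : α) : ZMod 2 :=
  w p q + pathSum par depth w p + pathSum par depth w q

theorem IsRootedTree.pathSum_root (ht : IsRootedTree B r par depth) :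
    pathSum par depth w r = 0 := by
  rw [pathSum, ht.depth_root, range_zero, sum_empty]

theorem IsRootedTree.pathSum_eq (ht : IsRootedTree B r par depth) (hq : q ∈ B) (hr : q ≠ r) :
    pathSum par depth w q = pathSum par depth w (par q) + w q (par q) := by
  rw [pathSum, ← ht.depth_par hq hr, sum_range_succ']
  rfl

theorem cycleSum_add : cycleSum par depth (fun x y => w x y + w' x y) p q =
    cycleSum par depth w p q + cycleSum par depth w' p q := by
  simp only [cycleSum, pathSum, sum_add_distrib]
  ring

theorem IsRootedTree.pathSum_congr (ht : IsRootedTree B r par depth)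
    (h : ∀ x ∈ B, x ≠ r → w x (par x) = w' x (par x)) (hq : q ∈ B) :
    pathSum par depth w q = pathSum par depth w' q := by
  refine ht.induction (P := fun q => pathSum par depth w q = pathSum par depth w' q) ?_
    (fun q hq hr ih => ?_) hq
  · simp only [ht.pathSum_root]
  · rw [ht.pathSum_eq hq hr, ht.pathSum_eq hq hr, ih, h q hq hr]

theorem IsRootedTree.pathSum_coboundary (ht : IsRootedTree B r par depth) (χ : α → ZMod 2)
    (hq : q ∈ B) : pathSum par depth (fun x y => χ x + χ y) q = χ r + χ q := by
  refine ht.induction (P := fun q => pathSum par depth (fun x y => χ x + χ y) q = χ r + χ q) ?_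
    (fun q hq hr ih => ?_) hq
  · rw [ht.pathSum_root, CharTwo.add_self_eq_zero]
  · rw [ht.pathSum_eq hq hr, ih]
    grind

theorem IsRootedTree.cycleSum_coboundary (ht : IsRootedTree B r par depth) (χ : α → ZMod 2)
    (hp : p ∈ B) (hq : q ∈ B) : cycleSum par depth (fun x y => χ x + χ y) p q = 0 := by
  rw [cycleSum, ht.pathSum_coboundary χ hp, ht.pathSum_coboundary χ hq]
  grind

theorem IsRootedTree.pathSum_eq_zero (ht : IsRootedTree B r par depth)
    (h : ∀ x ∈ B, x ≠ r → w x (par x) = 0) (hq : q ∈ B) : pathSum par depth w q = 0 := by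
  rw [ht.pathSum_congr (w' := fun _ _ => 0) h hq, pathSum, sum_const_zero]

theorem IsRootedTree.cycleSum_par (ht : IsRootedTree B r par depth) (hp : p ∈ B) (hr : p ≠ r) :
    cycleSum par depth w p (par p) = 0 := by
  rw [cycleSum, ht.pathSum_eq hp hr]
  grind

theorem cycleSum_comm (hw : w p q = w q p) :
    cycleSum par depth w p q = cycleSum par depth w q p := by
  simp only [cycleSum, hw]
  ring

end Cycles

section Triangulation

variable {N : ℕ} {p q p' q' s s' t t' m : ℕ × ℕ}

/-- The edges of the triangulated grid: the diagonal of slope one is added to every unit square. -/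
def IsTriEdge (p q : ℕ × ℕ) : Prop :=
  q = (p.1 + 1, p.2) ∨ q = (p.1, p.2 + 1) ∨ q = (p.1 + 1, p.2 + 1)

theorem IsTriEdge.eq_of_add_eq (h : IsTriEdge p q) (h' : IsTriEdge p' q') (hm : p + q = p' + q') :
    p = p' ∧ q = q' := by
  simp only [IsTriEdge, Prod.ext_iff, Prod.fst_add, Prod.snd_add] at *
  omega

theorem isTriEdge_or_of_adj (h : gridGraph.Adj p q) : IsTriEdge p q ∨ IsTriEdge q p := by
  rw [gridGraph_adj] at h
  simp only [IsTriEdge, Prod.ext_iff] at *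
  omega

/-- The number modulo two of crossings of the edge `pq` with the ray that leaves the triangle `t` to
the left. The triangles are the points `(2i, j)` and `(2i + 1, j)`, for the upper and the lower half
of the unit square with lower left corner `(i, j)`; as a ray at height `j + 1/2` meets an edge only
in its midpoint, the count involves only `p + q`. -/
def crossing (t p q : ℕ × ℕ) : ZMod 2 :=
  if p.2 + q.2 = 2 * t.2 + 1 ∧ p.1 + q.1 ≤ t.1 then 1 else 0

/-- The triangles `t` and `t'` share the side whose ends have sum `m`. -/
inductive TriangleAdj : ℕ × ℕ → ℕ × ℕ → ℕ × ℕ → Prop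
  | strip (x j : ℕ) : TriangleAdj (x, j) (x + 1, j) (x + 1, 2 * j + 1)
  | column (i j : ℕ) : TriangleAdj (2 * i, j) (2 * i + 1, j + 1) (2 * i + 1, 2 * j + 2)

/-- One of the sides of the triangle `t` has ends with sum `m`. -/
def HasSide (t m : ℕ × ℕ) : Prop := ∃ t', TriangleAdj t t' m ∨ TriangleAdj t' t m

/-- The indicator modulo two of the edge whose ends have sum `m`. -/
def edgeIndicator (m p q : ℕ × ℕ) : ZMod 2 := if p + q = m then 1 else 0

theorem crossing_add_crossing (h : TriangleAdj t t' m) : ∃ χ : ℕ × ℕ → ZMod 2,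
    ∀ p q, IsTriEdge p q →
      crossing t p q + crossing t' p q = edgeIndicator m p q + (χ p + χ q) := by
  cases h with
  | strip x j =>
    refine ⟨0, fun p q _ => ?_⟩
    simp only [crossing, edgeIndicator, Prod.ext_iff, Prod.fst_add, Prod.snd_add, Pi.zero_apply]
    grind
  | column i j =>
    refine ⟨fun p => if p.2 = j + 1 ∧ p.1 ≤ i then 1 else 0, ?_⟩
    rintro ⟨a, b⟩ q (rfl | rfl | rfl) <;>
      simp only [crossing, edgeIndicator, Prod.ext_iff, Prod.fst_add, Prod.snd_add] <;> grind

theorem crossing_comm : crossing t p q = crossing t q p := by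
  simp only [crossing, add_comm]

theorem edgeIndicator_comm : edgeIndicator m p q = edgeIndicator m q p := by
  simp only [edgeIndicator, add_comm]

/-- A spanning tree of `gridBox N` whose edges are grid edges. -/
structure IsGridTree (N : ℕ) (r : ℕ × ℕ) (par : ℕ × ℕ → ℕ × ℕ) (depth : ℕ × ℕ → ℕ) : Prop extends
    IsRootedTree (gridBox N : Set (ℕ × ℕ)) r par depth where
  adj : ∀ {q}, q ∈ gridBox N → q ≠ r → gridGraph.Adj (par q) q

/-- `pq` is an edge of the tree with root `r` and parent map `par`. -/
def IsTreeEdge {α : Type*} (r : α) (par : α → α) (p q : α) : Prop :=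
  (p ≠ r ∧ q = par p) ∨ (q ≠ r ∧ p = par q)

variable {r : ℕ × ℕ} {par : ℕ × ℕ → ℕ × ℕ} {depth : ℕ × ℕ → ℕ}

theorem IsGridTree.cycleSum_eq_of_add_coboundary (hT : IsGridTree N r par depth)
    {w w' : ℕ × ℕ → ℕ × ℕ → ZMod 2} (hw : ∀ p q, w p q = w q p) (hw' : ∀ p q, w' p q = w' q p)
    {χ : ℕ × ℕ → ZMod 2}
    (h : ∀ p ∈ gridBox N, ∀ q ∈ gridBox N, IsTriEdge p q → w p q = w' p q + (χ p + χ q))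
    (hp : p ∈ gridBox N) (hq : q ∈ gridBox N) (hpq : IsTriEdge p q) :
    cycleSum par depth w p q = cycleSum par depth w' p q := by
  have htree : ∀ x ∈ (gridBox N : Set (ℕ × ℕ)), x ≠ r →
      w x (par x) = w' x (par x) + (χ x + χ (par x)) := by
    intro x hx hxr
    rcases isTriEdge_or_of_adj (hT.adj hx hxr) with hadj | hadj
    · rw [hw, hw', add_comm (χ x)]
      exact h _ (hT.par_mem hx hxr) _ hx hadj
    · exact h _ hx _ (hT.par_mem hx hxr) hadj
  calc cycleSum par depth w p q
      = cycleSum par depth (fun x y => w' x y + (χ x + χ y)) p q :=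
        congr_arg₂ _ (congr_arg₂ _ (h p hp q hq hpq) (hT.pathSum_congr htree hp))
          (hT.pathSum_congr htree hq)
    _ = cycleSum par depth w' p q := by
        rw [cycleSum_add, hT.cycleSum_coboundary χ hp hq, add_zero]

theorem IsGridTree.cycleSum_crossing_add (hT : IsGridTree N r par depth) (h : TriangleAdj t t' m)
    (hp : p ∈ gridBox N) (hq : q ∈ gridBox N) (hpq : IsTriEdge p q) :
    cycleSum par depth (crossing t) p q + cycleSum par depth (crossing t') p q =
      cycleSum par depth (edgeIndicator m) p q := by
  obtain ⟨χ, hχ⟩ := crossing_add_crossing h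
  rw [← cycleSum_add]
  refine hT.cycleSum_eq_of_add_coboundary (fun x y => ?_) (fun x y => edgeIndicator_comm)
    (fun x _ y _ => hχ x y) hp hq hpq
  rw [crossing_comm, crossing_comm (t := t')]

/-- The triangle `t` is not contained in the box of side `N`. -/
def IsOuter (N : ℕ) (t : ℕ × ℕ) : Prop := t.1 ≤ 1 ∨ 2 * N ≤ t.1 ∨ t.2 = 0 ∨ N ≤ t.2

theorem IsGridTree.cycleSum_crossing_eq_zero (hT : IsGridTree N r par depth) (ht : IsOuter N t)
    (hp : p ∈ gridBox N) (hq : q ∈ gridBox N) (hpq : IsTriEdge p q) :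
    cycleSum par depth (crossing t) p q = 0 := by
  obtain ⟨χ, hχ⟩ : ∃ χ : ℕ × ℕ → ZMod 2, ∀ p ∈ gridBox N, ∀ q ∈ gridBox N, IsTriEdge p q →
      crossing t p q = 0 + (χ p + χ q) := by
    by_cases hright : 2 * N ≤ t.1
    · refine ⟨fun p => if p.2 ≤ t.2 then 1 else 0, ?_⟩
      rintro ⟨a, b⟩ hp q hq (rfl | rfl | rfl) <;> simp only [mem_gridBox, crossing] at * <;> grind
    · refine ⟨0, fun p hp q hq _ => ?_⟩
      rw [crossing, if_neg]
      · simp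
      · simp only [mem_gridBox, IsOuter] at *
        omega
  rw [hT.cycleSum_eq_of_add_coboundary (w' := fun _ _ => 0) (fun _ _ => crossing_comm)
    (fun _ _ => rfl) hχ hp hq hpq]
  simp [cycleSum, pathSum]

theorem IsTreeEdge.cycleSum_eq_zero (hT : IsGridTree N r par depth)
    {w : ℕ × ℕ → ℕ × ℕ → ZMod 2} (hw : ∀ p q, w p q = w q p) (h : IsTreeEdge r par p q)
    (hp : p ∈ gridBox N) (hq : q ∈ gridBox N) : cycleSum par depth w p q = 0 := by
  obtain ⟨hr, rfl⟩ | ⟨hr, rfl⟩ := h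
  · exact hT.cycleSum_par hp hr
  · rw [cycleSum_comm (hw _ _)]
    exact hT.cycleSum_par hq hr

theorem IsGridTree.cycleSum_edgeIndicator (hT : IsGridTree N r par depth) (hs : IsTriEdge s s')
    (hss : ¬ IsTreeEdge r par s s') (hp : p ∈ gridBox N) (hq : q ∈ gridBox N) :
    cycleSum par depth (edgeIndicator (s + s')) p q = edgeIndicator (s + s') p q := by
  have htree : ∀ x ∈ (gridBox N : Set (ℕ × ℕ)), x ≠ r →
      edgeIndicator (s + s') x (par x) = 0 := by
    refine fun x hx hxr => if_neg fun hm => hss ?_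
    rcases isTriEdge_or_of_adj (hT.adj hx hxr) with h | h
    · obtain ⟨rfl, rfl⟩ := h.eq_of_add_eq hs (by rwa [add_comm])
      exact Or.inr ⟨hxr, rfl⟩
    · obtain ⟨rfl, rfl⟩ := h.eq_of_add_eq hs hm
      exact Or.inl ⟨hxr, rfl⟩
  rw [cycleSum, hT.pathSum_eq_zero htree hp, hT.pathSum_eq_zero htree hq, add_zero, add_zero]

theorem IsGridTree.exists_sink (hT : IsGridTree N r par depth) (l : ℕ × ℕ → ℕ × ℕ → ZMod 2) :
    ∃ t, ∀ t₁, (∀ p ∈ gridBox N, ∀ q ∈ gridBox N, IsTriEdge p q →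
        cycleSum par depth (crossing t₁) p q = cycleSum par depth (crossing t) p q) →
      ∀ p ∈ gridBox N, ∀ q ∈ gridBox N, IsTriEdge p q → ¬ IsTreeEdge r par p q →
        HasSide t₁ (p + q) → cycleSum par depth (crossing t) p q = l p q := by
  classical
  let E := {e ∈ gridBox N ×ˢ gridBox N | IsTriEdge e.1 e.2 ∧ ¬ IsTreeEdge r par e.1 e.2}
  let bad (t : ℕ × ℕ) := {e ∈ E | cycleSum par depth (crossing t) e.1 e.2 ≠ l e.1 e.2}
  obtain ⟨t, ht⟩ : ∃ t, ∀ t', #(bad t) ≤ #(bad t') :=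
    ⟨_, fun t' => Function.argmin_le (fun t => #(bad t)) t'⟩
  refine ⟨t, fun t₁ ht₁ p hp q hq hpq hnt ⟨t₂, hadj⟩ => ?_⟩
  by_contra hne
  have hcross {x y : ℕ × ℕ} (hx : x ∈ gridBox N) (hy : y ∈ gridBox N) (hxy : IsTriEdge x y) :
      cycleSum par depth (crossing t) x y + cycleSum par depth (crossing t₂) x y =
        edgeIndicator (p + q) x y := by
    rw [← hT.cycleSum_edgeIndicator hpq hnt hx hy, ← ht₁ x hx y hy hxy]
    rcases hadj with h | h
    · exact hT.cycleSum_crossing_add h hx hy hxy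
    · rw [add_comm, hT.cycleSum_crossing_add h hx hy hxy]
  refine (ht t₂).not_gt (card_lt_card ⟨fun e he => ?_, fun hsub => ?_⟩)
  · simp only [bad, E, mem_filter, mem_product] at he ⊢
    refine ⟨he.1, ?_⟩
    have h := hcross he.1.1.1 he.1.1.2 he.1.2.1
    by_cases hm : e.1 + e.2 = p + q
    · obtain ⟨h1, h2⟩ := he.1.2.1.eq_of_add_eq hpq hm
      have hpq2 := hcross hp hq hpq
      rw [edgeIndicator, if_pos rfl] at hpq2
      rw [h1, h2] at he
      grind
    · rw [edgeIndicator, if_neg hm] at h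
      grind
  · have hmem : (p, q) ∈ bad t := by simp [bad, E, hp, hq, hpq, hnt, hne]
    have h := hcross hp hq hpq
    rw [edgeIndicator, if_pos rfl] at h
    exact (by decide : ∀ a b c : ZMod 2, a ≠ c → b ≠ c → a + b ≠ 1) _ _ _ hne
      (mem_filter.1 (hsub hmem)).2 h

end Triangulation

section Cover

variable {N : ℕ} {s t p q : ℕ × ℕ} {r : ℕ × ℕ} {par : ℕ × ℕ → ℕ × ℕ} {depth : ℕ × ℕ → ℕ}
  {l : ℕ × ℕ → ℕ × ℕ → ZMod 2} {C : ℕ × ℕ → ℕ × ℕ → Set (ℕ × ℕ)}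

/-- The triangle that has `s` as its lower left corner and a side to the right of `s`; it serves as
the position of the point `s` among the triangles. -/
def lowerTriangle (s : ℕ × ℕ) : ℕ × ℕ := (2 * s.1 + 1, s.2)

/-- The points `a`, `b`, `c` are the corners of the triangle `t`, in lexicographic order. -/
structure IsTriangle (t a b c : ℕ × ℕ) : Prop where
  edge_ab : IsTriEdge a b
  edge_bc : IsTriEdge b c
  edge_ac : IsTriEdge a c
  side_ab : HasSide t (a + b)
  side_bc : HasSide t (b + c)
  side_ac : HasSide t (a + c)
  crossing_sum : ∀ t', crossing t' a b + crossing t' b c + crossing t' a c = if t' = t then 1 else 0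
  eq_of_lowerTriangle : ∀ s, lowerTriangle s = t → s = a

theorem isTriangle_upper (i j : ℕ) (hi : 1 ≤ i) :
    IsTriangle (2 * i, j) (i, j) (i, j + 1) (i + 1, j + 1) where
  edge_ab := .inr (.inl rfl)
  edge_bc := .inl rfl
  edge_ac := .inr (.inr rfl)
  side_ab := ⟨(2 * i - 1, j), .inr (by
    obtain ⟨i, rfl⟩ := Nat.exists_eq_add_of_le' hi
    convert TriangleAdj.strip (2 * i + 1) j using 1 <;> grind [Prod.mk_add_mk])⟩
  side_bc := ⟨_, .inl (by convert TriangleAdj.column i j using 1; grind [Prod.mk_add_mk])⟩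
  side_ac := ⟨_, .inl (by convert TriangleAdj.strip (2 * i) j using 1; grind [Prod.mk_add_mk])⟩
  crossing_sum t' := by simp only [crossing, Prod.ext_iff]; grind
  eq_of_lowerTriangle s hs := by
    simp only [lowerTriangle, Prod.ext_iff] at hs
    omega

theorem isTriangle_lower (i j : ℕ) (hj : 1 ≤ j) :
    IsTriangle (2 * i + 1, j) (i, j) (i + 1, j) (i + 1, j + 1) where
  edge_ab := .inl rfl
  edge_bc := .inr (.inl rfl)
  edge_ac := .inr (.inr rfl)
  side_ab := ⟨(2 * i, j - 1), .inr (by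
    obtain ⟨j, rfl⟩ := Nat.exists_eq_add_of_le' hj
    convert TriangleAdj.column i j using 1 <;> grind [Prod.mk_add_mk])⟩
  side_bc := ⟨_, .inl (by
    convert TriangleAdj.strip (2 * i + 1) j using 1; grind [Prod.mk_add_mk])⟩
  side_ac := ⟨_, .inr (by convert TriangleAdj.strip (2 * i) j using 1; grind [Prod.mk_add_mk])⟩
  crossing_sum t' := by simp only [crossing, Prod.ext_iff]; grind
  eq_of_lowerTriangle s hs := by
    simp only [lowerTriangle, Prod.ext_iff] at hs ⊢
    omega

theorem exists_isTriangle (ht : ¬ IsOuter N t) :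
    ∃ a ∈ gridBox N, ∃ b ∈ gridBox N, ∃ c ∈ gridBox N, IsTriangle t a b c := by
  obtain ⟨x, j⟩ := t
  simp only [IsOuter, not_or, not_le] at ht
  obtain ⟨i, rfl | rfl⟩ := Nat.even_or_odd' x
  · refine ⟨_, ?_, _, ?_, _, ?_, isTriangle_upper i j (by omega)⟩ <;> rw [mem_gridBox] <;>
      dsimp only <;> omega
  · refine ⟨_, ?_, _, ?_, _, ?_, isTriangle_lower i j (by omega)⟩ <;> rw [mem_gridBox] <;>
      dsimp only <;> omega

theorem IsTriangle.cycleSum_sum {a b c : ℕ × ℕ} (h : IsTriangle t a b c) (t' : ℕ × ℕ) :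
    cycleSum par depth (crossing t') a b + cycleSum par depth (crossing t') b c +
      cycleSum par depth (crossing t') a c = if t' = t then 1 else 0 := by
  rw [← h.crossing_sum t']
  simp only [cycleSum]
  grind

theorem add_eq_sum_Ico_of_forall_add_succ {g w : ℕ → ZMod 2} {a b : ℕ} (hab : a ≤ b)
    (h : ∀ k, a ≤ k → k < b → g k + g (k + 1) = w k) : g a + g b = ∑ k ∈ Ico a b, w k := by
  induction b, hab using Nat.le_induction with
  | base => rw [Ico_self, sum_empty, CharTwo.add_self_eq_zero]
  | succ b hab ih =>
    have hlast := h b hab b.lt_succ_self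
    rw [sum_Ico_succ_top hab, ← ih fun k hk hkb => h k hk (hkb.trans b.lt_succ_self), ← hlast]
    grind

/- Otherwise the boundary of the box, a closed curve, would cross the ray from `s` only once. -/
theorem mem_gridFrame_of_crossing_eq (hs : s ∈ gridBox N) {g : ℕ × ℕ → ZMod 2}
    (hg : ∀ p ∈ gridFrame N, ∀ q ∈ gridFrame N, IsTriEdge p q →
      ∀ t, IsOuter N t → HasSide t (p + q) → g p + g q = crossing (lowerTriangle s) p q) :
    s ∈ gridFrame N := by
  by_contra hframe
  obtain ⟨i, j⟩ := s
  simp only [gridFrame, mem_gridBox, Set.mem_ofPred_eq, not_and, not_or] at hs hframe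
  have hN : 1 ≤ N := by omega
  have hmem {x y : ℕ} (h : ((1 ≤ x ∧ x ≤ N) ∧ 1 ≤ y ∧ y ≤ N) ∧ (x = 1 ∨ x = N ∨ y = 1 ∨ y = N)) :
      (x, y) ∈ gridFrame N := ⟨mem_gridBox.2 h.1, h.2⟩
  have hbottom : g (1, 1) + g (N, 1) = ∑ k ∈ Ico 1 N, 0 :=
    add_eq_sum_Ico_of_forall_add_succ (g := fun k => g (k, 1)) hN fun k hk hkN => by
      have ht := isTriangle_upper k 0 hk
      rw [hg _ (hmem (by omega)) _ (hmem (by omega)) ht.edge_bc _ (by simp [IsOuter]) ht.side_bc,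
        crossing, if_neg]
      simp only [lowerTriangle]
      omega
  have htop : g (1, N) + g (N, N) = ∑ k ∈ Ico 1 N, 0 :=
    add_eq_sum_Ico_of_forall_add_succ (g := fun k => g (k, N)) hN fun k hk hkN => by
      have ht := isTriangle_lower k N hN
      rw [hg _ (hmem (by omega)) _ (hmem (by omega)) ht.edge_ab _ (by simp [IsOuter]) ht.side_ab,
        crossing, if_neg]
      simp only [lowerTriangle]
      omega
  have hright : g (N, 1) + g (N, N) = ∑ k ∈ Ico 1 N, 0 :=
    add_eq_sum_Ico_of_forall_add_succ (g := fun k => g (N, k)) hN fun k hk hkN => by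
      have ht := isTriangle_upper N k hN
      rw [hg _ (hmem (by omega)) _ (hmem (by omega)) ht.edge_ab _ (by simp [IsOuter]) ht.side_ab,
        crossing, if_neg]
      simp only [lowerTriangle]
      omega
  have hleft : g (1, 1) + g (1, N) = ∑ k ∈ Ico 1 N, if k = j then 1 else 0 :=
    add_eq_sum_Ico_of_forall_add_succ (g := fun k => g (1, k)) hN fun k hk hkN => by
      have ht := isTriangle_lower 0 k hk
      rw [hg _ (hmem (by omega)) _ (hmem (by omega)) ht.edge_bc _ (by simp [IsOuter]) ht.side_bc]
      simp only [crossing, lowerTriangle]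
      congr 1
      grind
  rw [sum_ite_eq', if_pos (mem_Ico.2 (by omega))] at hleft
  rw [sum_const_zero] at hbottom htop hright
  grind

/- At a sink `t` outside the box no point of the box is missed by `C₀`, as such a point would lie on
the frame; at a sink `t` inside the box the point missed by the three sets would lie in `t`. -/
theorem IsGridTree.subset_or_exists_subset_union (hT : IsGridTree N r par depth)
    {C₀ : Set (ℕ × ℕ)} (hmem : ∀ p ∈ gridBox N, ∀ q, p ∈ C p q)
    (hl : ∀ p ∈ gridBox N, ∀ q ∈ gridBox N, IsTriEdge p q → ∀ s ∈ gridBox N, s ∉ C p q →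
      cycleSum par depth (crossing (lowerTriangle s)) p q = l p q)
    (hC₀ : ∀ p ∈ gridFrame N, ∀ q ∈ gridFrame N, C p q = C₀) :
    ↑(gridBox N) ⊆ C₀ ∨ ∃ a ∈ gridBox N, ∃ b ∈ gridBox N, ∃ c ∈ gridBox N,
      ↑(gridBox N) ⊆ C a b ∪ C b c ∪ C a c := by
  obtain ⟨t, ht⟩ := hT.exists_sink l
  have hsink {p q s : ℕ × ℕ} (hp : p ∈ gridBox N) (hq : q ∈ gridBox N) (hpq : IsTriEdge p q)
      {t₁ : ℕ × ℕ} (ht₁ : ∀ p ∈ gridBox N, ∀ q ∈ gridBox N, IsTriEdge p q →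
        cycleSum par depth (crossing t₁) p q = cycleSum par depth (crossing t) p q)
      (hside : HasSide t₁ (p + q)) (hs : s ∈ gridBox N) (hsC : s ∉ C p q) :
      cycleSum par depth (crossing (lowerTriangle s)) p q =
        cycleSum par depth (crossing t) p q := by
    by_cases htree : IsTreeEdge r par p q
    · rw [htree.cycleSum_eq_zero hT (fun _ _ => crossing_comm) hp hq,
        htree.cycleSum_eq_zero hT (fun _ _ => crossing_comm) hp hq]
    · rw [hl p hp q hq hpq s hs hsC, ht t₁ ht₁ p hp q hq hpq htree hside]
  by_cases hout : IsOuter N t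
  · refine .inl fun s hs => by_contra fun hsC => hsC ?_
    have hframe : s ∈ gridFrame N :=
      mem_gridFrame_of_crossing_eq hs (g := pathSum par depth (crossing (lowerTriangle s)))
        fun p hp q hq hpq t₁ ht₁ hside => by
          have h := hsink hp.1 hq.1 hpq (t₁ := t₁) (fun p hp q hq hpq => by
            rw [hT.cycleSum_crossing_eq_zero ht₁ hp hq hpq,
              hT.cycleSum_crossing_eq_zero hout hp hq hpq]) hside hs (by rwa [hC₀ p hp q hq])
          rw [hT.cycleSum_crossing_eq_zero hout hp.1 hq.1 hpq, cycleSum] at h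
          grind
    exact hC₀ s hframe s hframe ▸ hmem s hs s
  · obtain ⟨a, ha, b, hb, c, hc, h⟩ := exists_isTriangle hout
    refine .inr ⟨a, ha, b, hb, c, hc, fun s hs => by_contra fun hsC => hsC ?_⟩
    simp only [Set.mem_union, not_or] at hsC
    have hsum := h.cycleSum_sum (par := par) (depth := depth) (lowerTriangle s)
    have hsum' := h.cycleSum_sum (par := par) (depth := depth) t
    rw [hsink ha hb h.edge_ab (fun _ _ _ _ _ => rfl) h.side_ab hs hsC.1.1,
      hsink hb hc h.edge_bc (fun _ _ _ _ _ => rfl) h.side_bc hs hsC.1.2,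
      hsink ha hc h.edge_ac (fun _ _ _ _ _ => rfl) h.side_ac hs hsC.2, hsum', if_pos rfl] at hsum
    have hst : lowerTriangle s = t := by_contra fun hne => by simp [hne] at hsum
    obtain rfl := h.eq_of_lowerTriangle s hst
    exact .inl (.inl (hmem s hs b))

end Cover

section ColoredTree

variable {V : Type*} {G : SimpleGraph V} {N : ℕ} {φ : ℕ × ℕ → V} {b v : V} {f : V → V}
  {r : ℕ × ℕ} {par : ℕ × ℕ → ℕ × ℕ} {depth : ℕ × ℕ → ℕ}

/-- A spanning tree of the grid that lies over the breadth-first search tree of `G` rooted at `v`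
with parent map `f`. -/
structure IsLiftedTree (N : ℕ) (φ : ℕ × ℕ → V) (v : V) (f : V → V) (r : ℕ × ℕ)
    (par : ℕ × ℕ → ℕ × ℕ) (depth : ℕ × ℕ → ℕ) : Prop extends IsGridTree N r par depth where
  color_root : φ r = v
  color_par : ∀ {q}, q ∈ gridBox N → q ≠ r → φ (par q) = φ q ∨ φ (par q) = f (φ q)

theorem GridColoring.exists_mem_gridBox (hφ : GridColoring G N φ b) (u : V) :
    ∃ p ∈ gridBox N, φ p = u :=
  nonempty_subtype.1 (hφ.connected u).nonempty

theorem GridColoring.exists_isLiftedTree (hφ : GridColoring G N φ b) (hf : IsBFSParent G v f) :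
    ∃ r par depth, IsLiftedTree N φ v f r par depth := by
  obtain ⟨r, hr, hrv⟩ := hφ.exists_mem_gridBox v
  let R (x y : ℕ × ℕ) : Prop :=
    y ∈ gridBox N ∧ gridGraph.Adj x y ∧ (φ x = φ y ∨ φ x = f (φ y))
  have hclass {p q : ℕ × ℕ} (hp : p ∈ gridBox N) (hq : q ∈ gridBox N) (hpq : φ p = φ q)
      (h : ReflTransGen R r p) : ReflTransGen R r q :=
    induction_on_preconnected_induce (hφ.connected (φ q)).preconnected ⟨hp, hpq⟩ ⟨hq, rfl⟩ h
      fun x hx y hy hxy hrx => hrx.tail ⟨hy.1, hxy, .inl (hx.2.trans hy.2.symm)⟩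
  have hreach (n : ℕ) : ∀ q ∈ gridBox N, G.dist v (φ q) = n → ReflTransGen R r q := by
    induction n with
    | zero =>
      refine fun q hq hn => hclass hr hq (hrv.trans (by_contra fun hqv => ?_)) .refl
      have := hf.dist _ (Ne.symm hqv)
      omega
    | succ n ih =>
      intro q hq hn
      have hqv : φ q ≠ v := by
        rintro h
        simp [h] at hn
      obtain ⟨p, hp, q', hq', hpq, hpf, hqq⟩ := hφ.adj _ _ (hf.adj _ hqv).symm
      have hpn : G.dist v (φ p) = n := by
        have := hf.dist _ hqv
        rw [hpf]
        omega
      exact hclass hq' hq hqq ((ih p hp hpn).tail ⟨hq', hpq, .inr (by rw [hpf, hqq])⟩)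
  obtain ⟨par, depth, hT, hpar⟩ := exists_isRootedTree R r
  have hbox : {q | ReflTransGen R r q} = (gridBox N : Set (ℕ × ℕ)) := by
    refine Set.Subset.antisymm (fun q hq => ?_) fun q hq => hreach _ q hq rfl
    obtain rfl | ⟨_, -, h⟩ := hq.cases_tail
    exacts [hr, h.1]
  rw [hbox] at hT
  exact ⟨r, par, depth,
    ⟨⟨hT, fun hq hqr => (hpar _ (hreach _ _ hq rfl) hqr).2.1⟩, hrv,
      fun hq hqr => (hpar _ (hreach _ _ hq rfl) hqr).2.2⟩⟩

variable {W : Set V} {p q s s' t t' : ℕ × ℕ}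

theorem IsLiftedTree.isRootedTree_preimage (hT : IsLiftedTree N φ v f r par depth) (hv : v ∈ W)
    (hW : ∀ u ∈ W, f u ∈ W) : IsRootedTree {q | q ∈ gridBox N ∧ φ q ∈ W} r par depth where
  root_mem := ⟨hT.root_mem, hT.color_root.symm ▸ hv⟩
  depth_root := hT.depth_root
  par_mem hq hr := ⟨hT.par_mem hq.1 hr, by
    rcases hT.color_par hq.1 hr with h | h <;> rw [h]
    exacts [hq.2, hW _ hq.2]⟩
  depth_par hq hr := hT.depth_par hq.1 hr

theorem edgeIndicator_eq_zero (hs : IsTriEdge s s') (hsW : φ s ∉ W ∨ φ s' ∉ W)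
    (hpq : IsTriEdge p q ∨ IsTriEdge q p) (hp : φ p ∈ W) (hq : φ q ∈ W) :
    edgeIndicator (s + s') p q = 0 := by
  refine if_neg fun hm => ?_
  rcases hpq with h | h
  · obtain ⟨rfl, rfl⟩ := h.eq_of_add_eq hs hm
    tauto
  · obtain ⟨rfl, rfl⟩ := h.eq_of_add_eq hs (by rwa [add_comm])
    tauto

theorem IsLiftedTree.cycleSum_crossing_eq_of_triangleAdj (hT : IsLiftedTree N φ v f r par depth)
    (hv : v ∈ W) (hW : ∀ u ∈ W, f u ∈ W) (ht : TriangleAdj t t' (s + s')) (hs : IsTriEdge s s')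
    (hsW : φ s ∉ W ∨ φ s' ∉ W) (hp : p ∈ gridBox N) (hpW : φ p ∈ W) (hq : q ∈ gridBox N)
    (hqW : φ q ∈ W) (hpq : IsTriEdge p q) :
    cycleSum par depth (crossing t) p q = cycleSum par depth (crossing t') p q := by
  have hT' := hT.isRootedTree_preimage hv hW
  have htree : ∀ x ∈ {q | q ∈ gridBox N ∧ φ q ∈ W}, x ≠ r →
      edgeIndicator (s + s') x (par x) = 0 := fun x hx hxr =>
    edgeIndicator_eq_zero hs hsW (isTriEdge_or_of_adj (hT.adj hx.1 hxr).symm) hx.2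
      (hT'.par_mem hx hxr).2
  rw [← CharTwo.add_eq_zero, hT.cycleSum_crossing_add ht hp hq hpq, cycleSum,
    edgeIndicator_eq_zero hs hsW (.inl hpq) hpW hqW, hT'.pathSum_eq_zero htree ⟨hp, hpW⟩,
    hT'.pathSum_eq_zero htree ⟨hq, hqW⟩, add_zero, add_zero]

/- The steps from `lowerTriangle s` to `lowerTriangle s'` cross edges that have `s` or `s'` as an
end. -/
theorem IsLiftedTree.cycleSum_lowerTriangle_eq_of_adj (hT : IsLiftedTree N φ v f r par depth)
    (hv : v ∈ W) (hW : ∀ u ∈ W, f u ∈ W) (hs : gridGraph.Adj s s') (hsW : φ s ∉ W)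
    (hsW' : φ s' ∉ W) (hp : p ∈ gridBox N) (hpW : φ p ∈ W) (hq : q ∈ gridBox N) (hqW : φ q ∈ W)
    (hpq : IsTriEdge p q) :
    cycleSum par depth (crossing (lowerTriangle s)) p q =
      cycleSum par depth (crossing (lowerTriangle s')) p q := by
  have hmove {a b t t' m : ℕ × ℕ} (ht : TriangleAdj t t' m) (hm : m = a + b) (hab : IsTriEdge a b)
      (haW : φ a ∉ W) :=
    hT.cycleSum_crossing_eq_of_triangleAdj hv hW (hm ▸ ht) hab (.inl haW) hp hpW hq hqW hpq
  have hright (i j : ℕ) (h : φ (i + 1, j) ∉ W) :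
      cycleSum par depth (crossing (lowerTriangle (i, j))) p q =
        cycleSum par depth (crossing (lowerTriangle (i + 1, j))) p q :=
    (hmove (.strip (2 * i + 1) j) (b := (i + 1, j + 1)) (by grind [Prod.mk_add_mk])
        (.inr (.inl rfl)) h).trans
      (hmove (.strip (2 * i + 2) j) (b := (i + 1 + 1, j + 1)) (by grind [Prod.mk_add_mk])
        (.inr (.inr rfl)) h)
  have hup (i j : ℕ) (h : φ (i, j) ∉ W) (h' : φ (i, j + 1) ∉ W) :
      cycleSum par depth (crossing (lowerTriangle (i, j))) p q =
        cycleSum par depth (crossing (lowerTriangle (i, j + 1))) p q :=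
    (hmove (.strip (2 * i) j) (b := (i + 1, j + 1)) (by grind [Prod.mk_add_mk])
        (.inr (.inr rfl)) h).symm.trans
      (hmove (.column i j) (b := (i + 1, j + 1)) (by grind [Prod.mk_add_mk]) (.inl rfl) h')
  obtain rfl | rfl | rfl | rfl := gridGraph_adj.1 hs
  exacts [hright _ _ hsW', hup _ _ hsW hsW', (hright _ _ hsW).symm, (hup _ _ hsW' hsW).symm]

theorem IsLiftedTree.cycleSum_lowerTriangle_eq_of_reflTransGen (hφ : GridColoring G N φ b)
    (hT : IsLiftedTree N φ v f r par depth) (hv : v ∈ W) (hW : ∀ u ∈ W, f u ∈ W)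
    (hs : s ∈ gridBox N) (hs' : s' ∈ gridBox N) (hsW' : φ s' ∉ W)
    (h : ReflTransGen (fun y w => G.Adj y w ∧ y ∉ W ∧ w ∉ W) (φ s) (φ s'))
    (hp : p ∈ gridBox N) (hpW : φ p ∈ W) (hq : q ∈ gridBox N) (hqW : φ q ∈ W)
    (hpq : IsTriEdge p q) :
    cycleSum par depth (crossing (lowerTriangle s)) p q =
      cycleSum par depth (crossing (lowerTriangle s')) p q := by
  have hadj {x y : ℕ × ℕ} (hxy : gridGraph.Adj x y) (hx : φ x ∉ W) (hy : φ y ∉ W) :=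
    hT.cycleSum_lowerTriangle_eq_of_adj hv hW hxy hx hy hp hpW hq hqW hpq
  have hclass {x y : ℕ × ℕ} (hx : x ∈ gridBox N) (hy : y ∈ gridBox N) (hxy : φ x = φ y)
      (hyW : φ y ∉ W) : cycleSum par depth (crossing (lowerTriangle x)) p q =
        cycleSum par depth (crossing (lowerTriangle y)) p q :=
    induction_on_preconnected_induce (hφ.connected (φ y)).preconnected (p := x)
      (P := fun z => cycleSum par depth (crossing (lowerTriangle x)) p q =
        cycleSum par depth (crossing (lowerTriangle z)) p q) ⟨hx, hxy⟩ ⟨hy, rfl⟩ rfl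
      fun z hz z' hz' hzz h => h.trans (hadj hzz (hz.2 ▸ hyW) (hz'.2 ▸ hyW))
  generalize hu : φ s' = u at h
  induction h generalizing s' with
  | refl => exact hclass hs hs' hu.symm hsW'
  | tail _ hyw ih =>
    obtain ⟨x, hx, x', hx', hxx, hxy, hxw⟩ := hφ.adj _ _ hyw.1
    rw [ih hx (hxy ▸ hyw.2.1) hxy, hadj hxx (hxy ▸ hyw.2.1) (hxw ▸ hyw.2.2)]
    exact hclass hx' hs' (hxw.trans hu.symm) hsW'

end ColoredTree

section ThreeWalls

variable {V : Type*} {G : SimpleGraph V} {N : ℕ} {φ : ℕ × ℕ → V} {b v : V} {Z : Set V}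

/- A wall saves all vertices but those on one of its sides. For three walls, or just one, these
sides have an empty intersection. -/
theorem GridColoring.exists_cover [Finite V] (hφ : GridColoring G N φ b)
    (hG : G.Connected) (hZ : ∀ z ∈ Z, ∀ y, G.Adj z y → y ∈ Z ∨ y = v)
    (hdeg : {w | G.Adj v w ∧ w ∉ Z}.ncard ≤ 3) :
    ∃ S₁ S₂ S₃ : Set V, S₁.ncard ≤ sn G (fun _ => 2) v ∧ S₂.ncard ≤ sn G (fun _ => 2) v ∧
      S₃.ncard ≤ sn G (fun _ => 2) v ∧ S₁ ∪ S₂ ∪ S₃ ∪ insert v Z = Set.univ := by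
  obtain ⟨f, hf⟩ := exists_isBFSParent hG v
  obtain ⟨r, par, depth, hT⟩ := hφ.exists_isLiftedTree hf
  choose x S hS hconf using hf.exists_confined hG hZ hdeg
  choose cell hcell hcolor using hφ.exists_mem_gridBox
  let C (p q : ℕ × ℕ) : Set (ℕ × ℕ) := {s | φ s ∈ S (φ p) (φ q) ∪ insert v Z}
  let l (p q : ℕ × ℕ) : ZMod 2 :=
    cycleSum par depth (crossing (lowerTriangle (cell (x (φ p) (φ q))))) p q
  have hconfC {p q s : ℕ × ℕ} (hs : s ∉ C p q) :=
    hconf (φ p) (φ q) (φ s) (fun h => hs (.inl h)) (fun h => hs (.inr (.inl h)))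
      (fun h => hs (.inr (.inr h)))
  have hmem (p) (_ : p ∈ gridBox N) (q) : p ∈ C p q :=
    by_contra fun h => (hconfC h).1 (.inl (self_mem_ancestors f _))
  have hl (p) (hp : p ∈ gridBox N) (q) (hq : q ∈ gridBox N) (hpq : IsTriEdge p q) (s)
      (hs : s ∈ gridBox N) (hsC : s ∉ C p q) :
      cycleSum par depth (crossing (lowerTriangle s)) p q = l p q := by
    obtain ⟨hsW, hreach⟩ := hconfC hsC
    rw [← hcolor (x (φ p) (φ q))] at hreach
    exact (hT.cycleSum_lowerTriangle_eq_of_reflTransGen hφ (.inl (hf.root_mem_ancestors hG _))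
      (fun u hu => hu.imp apply_mem_ancestors apply_mem_ancestors) (hcell _) hs hsW hreach hp
      (.inl (self_mem_ancestors f _)) hq (.inr (self_mem_ancestors f _)) hpq).symm
  obtain ⟨p, q, z, hcover⟩ : ∃ p q z, ↑(gridBox N) ⊆ C p q ∪ C q z ∪ C p z := by
    rcases hT.subset_or_exists_subset_union hmem hl (C₀ := C (cell b) (cell b))
      (fun p hp q hq => by simp only [C, hφ.frame p hp, hφ.frame q hq, hcolor])
      with h | ⟨p, -, q, -, z, -, h⟩
    · exact ⟨cell b, cell b, cell b, h.trans fun s hs => .inl (.inl hs)⟩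
    · exact ⟨p, q, z, h⟩
  refine ⟨S (φ p) (φ q), S (φ q) (φ z), S (φ p) (φ z), hS _ _, hS _ _, hS _ _,
    Set.eq_univ_of_forall fun u => ?_⟩
  have := hcover (hcell u)
  simp only [C, Set.mem_union, Set.mem_ofPred_eq, hcolor] at this ⊢
  tauto

theorem GridColoring.card_le_three_mul_sn_add [Fintype V] (hφ : GridColoring G N φ b)
    (hG : G.Connected) (hZ : ∀ z ∈ Z, ∀ y, G.Adj z y → y ∈ Z ∨ y = v)
    (hdeg : {w | G.Adj v w ∧ w ∉ Z}.ncard ≤ 3) :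
    Fintype.card V ≤ 3 * sn G (fun _ => 2) v + 1 + Z.ncard := by
  obtain ⟨S₁, S₂, S₃, h₁, h₂, h₃, huniv⟩ := hφ.exists_cover hG hZ hdeg
  have hcard := Set.ncard_univ V
  rw [← huniv, Nat.card_eq_fintype_card] at hcard
  have := Set.ncard_union_le (S₁ ∪ S₂ ∪ S₃) (insert v Z)
  have := Set.ncard_union_le (S₁ ∪ S₂) S₃
  have := Set.ncard_union_le S₁ S₂
  have := Set.ncard_insert_le v Z
  omega

end ThreeWalls

section PendantForests

variable {V : Type*} {G : SimpleGraph V} {H : Finset V} {par top : V → V} {rank : V → ℕ}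
  {u v x y : V}

open Classical in
/-- The neighbours of `x` in the graph induced on `H`; `x` itself need not lie in `H`. -/
noncomputable def neighborsIn (G : SimpleGraph V) (H : Finset V) (x : V) : Finset V :=
  {y ∈ H | G.Adj x y}

theorem mem_neighborsIn : y ∈ neighborsIn G H x ↔ y ∈ H ∧ G.Adj x y := by
  simp [neighborsIn]

/-- The vertices outside the core `H` form a forest hanging off `H`: the neighbours of such a
vertex `v` are its parent `par v`, possibly in `H`, and its children. Following parents from `v`
leads to the core vertex `top v`; `rank` strictly increases along the way. -/
structure IsPendantForest (G : SimpleGraph V) (H : Finset V) (par top : V → V) (rank : V → ℕ) :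
    Prop where
  rank_lt : ∀ v ∉ H, par v ∉ H → rank v < rank (par v)
  eq_par_or : ∀ v ∉ H, ∀ w, G.Adj v w → w = par v ∨ (w ∉ H ∧ par w = v)
  top_mem : ∀ v, top v ∈ H
  top_of_mem : ∀ v ∈ H, top v = v
  top_par : ∀ v ∉ H, top (par v) = top v

namespace IsPendantForest

theorem univ [Fintype V] (G : SimpleGraph V) : IsPendantForest G .univ id id 0 := by
  constructor <;> simp

theorem top_eq_or_mem (h : IsPendantForest G H par top rank) (hxy : G.Adj x y) :
    top x = top y ∨ x ∈ H ∧ y ∈ H := by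
  by_cases hx : x ∈ H
  · by_cases hy : y ∈ H
    · exact .inr ⟨hx, hy⟩
    · obtain rfl | ⟨hx', -⟩ := h.eq_par_or y hy x hxy.symm
      exacts [.inl (h.top_par y hy), absurd hx hx']
  · obtain rfl | ⟨hy, rfl⟩ := h.eq_par_or x hx y hxy
    exacts [.inl (h.top_par x hx).symm, .inl (h.top_par y hy)]

theorem exists_mem_neighborsIn (h : IsPendantForest G H par top rank)
    (hG : G.Connected) (hu : u ∈ H) (hv : v ∈ H) (huv : u ≠ v) : ∃ w, w ∈ neighborsIn G H v := by
  obtain ⟨walk⟩ := hG.preconnected v u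
  obtain ⟨d, -, hfst, hsnd⟩ := walk.exists_boundary_dart {x | top x = v} (h.top_of_mem v hv)
    (by simpa [h.top_of_mem u hu] using huv)
  obtain heq | ⟨hH, hH'⟩ := h.top_eq_or_mem d.adj
  · exact absurd (heq.symm.trans hfst) hsnd
  · obtain rfl : d.fst = v := (h.top_of_mem _ hH).symm.trans hfst
    exact ⟨d.snd, mem_neighborsIn.2 ⟨hH', d.adj⟩⟩

variable [DecidableEq V]

theorem erase [Fintype V] (h : IsPendantForest G H par top rank) (hv : v ∈ H)
    (hvu : neighborsIn G H v = {u}) :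
    IsPendantForest G (H.erase v) (Function.update par v u)
      (fun w => if top w = v then u else top w)
      (Function.update rank v (Finset.univ.sup rank + 1)) := by
  have hu {w} : w ∈ H ∧ G.Adj v w ↔ w = u := by rw [← mem_neighborsIn, hvu, mem_singleton]
  obtain ⟨huH, huv⟩ := hu.2 rfl
  refine ⟨fun x hx hpx => ?_, fun x hx w hxw => ?_, fun x => ?_, fun x hx => ?_, fun x hx => ?_⟩
  · obtain rfl | hxv := eq_or_ne x v
    · exact absurd (mem_erase.2 ⟨huv.ne', huH⟩) (by simpa using hpx)
    · rw [Function.update_of_ne hxv] at hpx ⊢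
      rw [Function.update_of_ne hxv]
      obtain hpv | hpv := eq_or_ne (par x) v
      · rw [hpv, Function.update_self]
        exact Nat.lt_succ_of_le (le_sup (mem_univ x))
      · rw [Function.update_of_ne hpv]
        exact h.rank_lt x (fun hxH => hx (mem_erase.2 ⟨hxv, hxH⟩))
          fun hpH => hpx (mem_erase.2 ⟨hpv, hpH⟩)
  · have hxw' := h.eq_par_or x
    have hwx' := h.eq_par_or w
    grind [G.adj_comm, Function.update_apply, SimpleGraph.irrefl]
  · split_ifs with hxv
    · exact mem_erase.2 ⟨huv.ne', huH⟩
    · exact mem_erase.2 ⟨hxv, h.top_mem x⟩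
  · grind [h.top_of_mem x]
  · grind [h.top_par x, h.top_of_mem v, h.top_of_mem u, Function.update_apply]

end IsPendantForest

variable [DecidableEq V]

theorem sum_card_neighborsIn_erase (hv : v ∈ H) (hvu : neighborsIn G H v = {u}) :
    ∑ x ∈ H.erase v, #(neighborsIn G (H.erase v) x) + 2 = ∑ x ∈ H, #(neighborsIn G H x) := by
  have hu {w} : w ∈ H ∧ G.Adj v w ↔ w = u := by rw [← mem_neighborsIn, hvu, mem_singleton]
  obtain ⟨huH, huv⟩ := hu.2 rfl
  have hcard : ∀ x ∈ H.erase v,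
      #(neighborsIn G H x) = #(neighborsIn G (H.erase v) x) + if x = u then 1 else 0 := by
    intro x hx
    have herase : neighborsIn G (H.erase v) x = (neighborsIn G H x).erase v := by
      ext y
      simp only [mem_neighborsIn, mem_erase, and_assoc]
    have hvx : v ∈ neighborsIn G H x ↔ x = u := by
      rw [← hu, mem_neighborsIn, G.adj_comm, and_iff_right hv, and_iff_right (mem_of_mem_erase hx)]
    rw [herase, card_erase_eq_ite]
    split_ifs with h₁ h₂ h₂
    · exact (Nat.sub_add_cancel (card_pos.2 ⟨v, h₁⟩)).symm
    · exact absurd (hvx.1 h₁) h₂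
    · exact absurd (hvx.2 h₂) h₁
    · rfl
  rw [← add_sum_erase H _ hv, hvu, card_singleton, sum_congr rfl hcard, sum_add_distrib,
    sum_ite_eq', if_pos (mem_erase.2 ⟨huv.ne', huH⟩)]
  ring

/-- The core is what remains after repeatedly deleting a vertex of degree one. -/
theorem exists_isPendantForest_singleton_or_two_le_card [Fintype V] (hG : G.Connected) :
    ∃ H par top rank, IsPendantForest G H par top rank ∧
      ((∃ r, H = {r}) ∨ ∀ v ∈ H, 2 ≤ #(neighborsIn G H v)) ∧
      ∑ x ∈ H, #(neighborsIn G H x) + 2 * #Hᶜ = ∑ x, #(neighborsIn G univ x) := by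
  let IsCore (H : Finset V) := (∃ par top rank, IsPendantForest G H par top rank) ∧
    ∑ x ∈ H, #(neighborsIn G H x) + 2 * #Hᶜ = ∑ x, #(neighborsIn G univ x)
  obtain ⟨H, ⟨⟨par, top, rank, hP⟩, hsum⟩, hmin⟩ := exists_minimalFor_of_wellFoundedLT IsCore
    Finset.card ⟨univ, ⟨_, _, _, .univ G⟩, by simp⟩
  refine ⟨H, par, top, rank, hP, or_iff_not_imp_left.2 fun hsing v hv => ?_, hsum⟩
  by_contra! hlt
  obtain ⟨w, hw, hwv⟩ : ∃ w ∈ H, w ≠ v := by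
    by_contra! hH
    exact hsing ⟨v, eq_singleton_iff_unique_mem.2 ⟨hv, hH⟩⟩
  have hpos := card_pos.2 (hP.exists_mem_neighborsIn hG hw hv hwv)
  obtain ⟨u, hvu⟩ := card_eq_one.1 (by omega : #(neighborsIn G H v) = 1)
  have hsum' := sum_card_neighborsIn_erase hv hvu
  have hcompl := card_add_card_compl H
  have hcompl' := card_add_card_compl (H.erase v)
  have hlt' := card_erase_lt_of_mem hv
  have hcard' := card_erase_add_one hv
  exact hlt'.not_ge (hmin ⟨⟨_, _, _, hP.erase hv hvu⟩, by omega⟩ hlt'.le)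

theorem IsPendantForest.card_le_sn_add_card [Fintype V] (h : IsPendantForest G H par top rank)
    {C : Finset V} {τ : V → ℕ} {P : ℕ → Finset V} (hcard : ∀ t, #(P t) ≤ 2)
    (hdisj : ∀ t, ∀ x ∈ P t, x ∈ H ∧ x ∉ C) (hvH : v ∈ H) (hv : v ∈ C) (hτ : τ v = 0)
    (hstep : ∀ x ∈ C, ∀ y ∈ neighborsIn G H x,
      (y ∈ C ∧ τ y ≤ τ x + 1) ∨ ∃ s ≤ τ x, y ∈ P s) :
    Fintype.card V ≤ sn G (fun _ => 2) v + #{x | top x ∈ C} := by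
  rw [← Set.ncard_coe_finset]
  refine Containment.card_le_sn_add (τ := τ ∘ top) (P := P) ⟨hcard, fun t x hx hxC => ?_, ?_, ?_,
    fun x hx y hxy => ?_⟩
  · obtain ⟨hxH, hxC'⟩ := hdisj t x hx
    exact hxC' (by simpa [h.top_of_mem x hxH] using hxC)
  · simpa [h.top_of_mem v hvH] using hv
  · rwa [Function.comp, h.top_of_mem v hvH]
  · have hx : top x ∈ C := by simpa using hx
    simp only [coe_filter, mem_univ, true_and, Set.mem_ofPred_eq, Function.comp]
    obtain heq | ⟨hxH, hyH⟩ := h.top_eq_or_mem hxy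
    · exact .inl (heq ▸ ⟨hx, Nat.le_succ _⟩)
    · rw [h.top_of_mem x hxH] at hx ⊢
      rw [h.top_of_mem y hyH]
      exact hstep x hx y (mem_neighborsIn.2 ⟨hyH, hxy⟩)

theorem IsPendantForest.card_le_sn_add_of_card_le_two [Fintype V]
    (h : IsPendantForest G H par top rank) (hv : v ∈ H) (hdeg : #(neighborsIn G H v) ≤ 2) :
    Fintype.card V ≤ sn G (fun _ => 2) v + #{x | top x = v} := by
  simpa using h.card_le_sn_add_card (C := {v}) (τ := 0) (P := fun _ => neighborsIn G H v)
    (fun _ => hdeg)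
    (fun _ x hx => ⟨(mem_neighborsIn.1 hx).1, by simpa using (mem_neighborsIn.1 hx).2.ne'⟩) hv
    (mem_singleton_self v) rfl (fun x hx y hy => .inr ⟨0, le_rfl, mem_singleton.1 hx ▸ hy⟩)

theorem IsPendantForest.card_le_three_mul_sn_add [Fintype V]
    (h : IsPendantForest G H par top rank) (hG : G.Connected) (hplanar : IsPlanar G) (hv : v ∈ H)
    (hdeg : #(neighborsIn G H v) ≤ 3) :
    Fintype.card V ≤ 3 * sn G (fun _ => 2) v + #{x | top x = v} := by
  have := hG.nonempty
  obtain ⟨N, φ, b, hφ⟩ := hplanar.exists_gridColoring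
  have htop := h.top_of_mem v hv
  have hbound := hφ.card_le_three_mul_sn_add hG (Z := {x | top x = v} \ {v}) (v := v) ?_ ?_
  · have hsplit := Set.ncard_sdiff_singleton_add_one (s := {x | top x = v}) htop
    rw [← Set.ncard_coe_finset, coe_filter_univ]
    omega
  · rintro z ⟨hz : top z = v, hzv⟩ y hzy
    obtain heq | ⟨hzH, -⟩ := h.top_eq_or_mem hzy
    · exact (em (y = v)).symm.imp_left fun hyv => ⟨heq.symm.trans hz, hyv⟩
    · exact absurd ((h.top_of_mem z hzH).symm.trans hz) hzv
  · refine (Set.ncard_le_ncard (t := neighborsIn G H v) ?_).trans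
      ((Set.ncard_coe_finset _).trans_le hdeg)
    rintro w ⟨hvw, hw⟩
    obtain heq | ⟨-, hwH⟩ := h.top_eq_or_mem hvw
    · exact absurd ⟨heq.symm.trans htop, hvw.ne'⟩ hw
    · exact mem_neighborsIn.2 ⟨hwH, hvw⟩

end PendantForests

section PendantTrees

variable {V : Type*} {G : SimpleGraph V} {H : Finset V} {par top heir : V → V} {rank : V → ℕ}
  {v v' w w' : V}

/-- `a` is a child of `b`, both outside the core `H`. -/
def IsChild (H : Finset V) (par : V → V) (a b : V) : Prop :=
  a ∉ H ∧ b ∉ H ∧ par a = b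

open Classical in
/-- The strict descendants of `v` that burn, when the fire starts at `v` and the child `heir v` of
`v` gets protected. -/
noncomputable def burnedDescendants [Fintype V] (H : Finset V) (par heir : V → V) (v : V) :
    Finset V :=
  {w | TransGen (IsChild H par) w v ∧ ¬ ReflTransGen (IsChild H par) w (heir v)}

theorem mem_burnedDescendants [Fintype V] : w ∈ burnedDescendants H par heir v ↔
    TransGen (IsChild H par) w v ∧ ¬ ReflTransGen (IsChild H par) w (heir v) := by
  simp [burnedDescendants]

theorem transGen_isChild_iff : TransGen (IsChild H par) w v ↔
    IsChild H par w (par w) ∧ ReflTransGen (IsChild H par) (par w) v := by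
  rw [TransGen.head'_iff]
  constructor
  · rintro ⟨_, ⟨hw, hpar, rfl⟩, h⟩
    exact ⟨⟨hw, hpar, rfl⟩, h⟩
  · exact fun ⟨hw, h⟩ => ⟨_, hw, h⟩

theorem notMem_of_transGen_isChild (h : TransGen (IsChild H par) w v) : w ∉ H ∧ v ∉ H := by
  obtain ⟨_, hw, -⟩ := TransGen.head'_iff.1 h
  obtain ⟨_, -, hv⟩ := TransGen.tail'_iff.1 h
  exact ⟨hw.1, hv.2.1⟩

namespace IsPendantForest

theorem rank_lt_of_transGen (h : IsPendantForest G H par top rank)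
    (hwv : TransGen (IsChild H par) w v) : rank w < rank v := by
  have hstep : ∀ a b, IsChild H par a b → rank a < rank b := by
    rintro a _ ⟨ha, hb, rfl⟩
    exact h.rank_lt a ha hb
  induction hwv with
  | single hab => exact hstep _ _ hab
  | tail _ hab ih => exact ih.trans (hstep _ _ hab)

theorem not_transGen_self (h : IsPendantForest G H par top rank) :
    ¬ TransGen (IsChild H par) v v :=
  fun hv => (h.rank_lt_of_transGen hv).false

theorem reflTransGen_antisymm (h : IsPendantForest G H par top rank)
    (hwv : ReflTransGen (IsChild H par) w v) (hvw : ReflTransGen (IsChild H par) v w) : w = v := by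
  obtain rfl | hwv := reflTransGen_iff_eq_or_transGen.1 hwv
  exacts [rfl, absurd (hwv.trans_left hvw) h.not_transGen_self]

variable [Fintype V]

theorem card_le_sn_add_card_burnedDescendants (h : IsPendantForest G H par top rank)
    (hheir : ∀ a b, IsChild H par a b → IsChild H par (heir b) b) (hv : v ∉ H) :
    Fintype.card V ≤ sn G (fun _ => 2) v + (1 + #(burnedDescendants H par heir v)) := by
  classical
  set B := insert v (burnedDescendants H par heir v) with hB
  have hdesc {y} (hy : TransGen (IsChild H par) y v) (hyB : y ∉ B) :
      ReflTransGen (IsChild H par) y (heir v) :=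
    by_contra fun hn => hyB (mem_insert_of_mem (mem_burnedDescendants.2 ⟨hy, hn⟩))
  have hstep : ∀ x ∈ B, ∀ y, G.Adj x y → y ∉ B → y ∈ ({par v, heir v} : Finset V) := by
    intro x hx y hxy hyB
    obtain rfl | hx := mem_insert.1 hx
    · obtain rfl | ⟨hy, rfl⟩ := h.eq_par_or x hv y hxy
      · exact mem_insert_self _ _
      · have hchild : IsChild H par y (par y) := ⟨hy, hv, rfl⟩
        refine mem_insert_of_mem (mem_singleton.2 ?_)
        obtain heq | hlt := reflTransGen_iff_eq_or_transGen.1 (hdesc (.single hchild) hyB)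
        · exact heq.symm
        · exact absurd (.tail' (transGen_isChild_iff.1 hlt).2 (hheir _ _ hchild))
            h.not_transGen_self
    · obtain ⟨hxv, hxh⟩ := mem_burnedDescendants.1 hx
      have hxH := (notMem_of_transGen_isChild hxv).1
      obtain rfl | ⟨hy, rfl⟩ := h.eq_par_or x hxH y hxy
      · obtain ⟨hchild, hle⟩ := transGen_isChild_iff.1 hxv
        obtain rfl | hlt := reflTransGen_iff_eq_or_transGen.1 hle
        · exact absurd (mem_insert_self _ _) hyB
        · exact absurd (.head hchild (hdesc hlt hyB)) hxh
      · refine mem_insert_of_mem (mem_singleton.2 ?_)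
        obtain heq | hlt := reflTransGen_iff_eq_or_transGen.1
          (hdesc (.head ⟨hy, hxH, rfl⟩ hxv) hyB)
        · exact heq.symm
        · exact absurd (transGen_isChild_iff.1 hlt).2 hxh
  have hcard : #(({par v, heir v} : Finset V) \ B) ≤ 2 :=
    (card_le_card sdiff_subset).trans card_le_two
  have hcont : Containment G (fun _ => 2) v (B : Set V) 0 (fun _ => {par v, heir v} \ B) :=
    ⟨fun _ => hcard, fun _ x hx => (mem_sdiff.1 hx).2, mem_insert_self _ _, rfl,
      fun x hx y hxy => or_iff_not_imp_left.2 fun hy => ⟨0, le_rfl, ?_⟩⟩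
  · have := hcont.card_le_sn_add
    rw [Set.ncard_coe_finset] at this
    have : #B ≤ _ := card_insert_le v (burnedDescendants H par heir v)
    omega
  · have hyB : y ∉ B := fun hyB => hy ⟨hyB, Nat.zero_le _⟩
    exact mem_sdiff.2 ⟨hstep x hx y hxy hyB, hyB⟩

theorem isChild_heir_of_mem_burnedDescendants
    (hheir : ∀ a b, IsChild H par a b → IsChild H par (heir b) b)
    (hw : w ∈ burnedDescendants H par heir v) : IsChild H par (heir v) v := by
  obtain ⟨a, -, ha⟩ := TransGen.tail'_iff.1 (mem_burnedDescendants.1 hw).1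
  exact hheir a v ha

theorem not_reflTransGen_heir (h : IsPendantForest G H par top rank)
    (hheir : ∀ a b, IsChild H par a b → IsChild H par (heir b) b)
    (hw : w ∈ burnedDescendants H par heir v) : ¬ ReflTransGen (IsChild H par) (heir v) w := by
  intro hle
  obtain ⟨hwv, hwh⟩ := mem_burnedDescendants.1 hw
  obtain rfl | hlt := reflTransGen_iff_eq_or_transGen.1 hle
  · exact hwh .refl
  · have hvw := (transGen_isChild_iff.1 hlt).2
    rw [(isChild_heir_of_mem_burnedDescendants hheir hw).2.2] at hvw
    exact h.not_transGen_self (hwv.trans_left hvw)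

theorem eq_of_sym2_heir_eq (h : IsPendantForest G H par top rank)
    (hheir : ∀ a b, IsChild H par a b → IsChild H par (heir b) b)
    (hw : w ∈ burnedDescendants H par heir v) (hw' : w' ∈ burnedDescendants H par heir v')
    (heq : s(w, heir v) = s(w', heir v')) : v = v' ∧ w = w' := by
  have hpar := (isChild_heir_of_mem_burnedDescendants hheir hw).2.2
  have hpar' := (isChild_heir_of_mem_burnedDescendants hheir hw').2.2
  rw [mem_burnedDescendants, transGen_isChild_iff] at hw hw'
  obtain ⟨rfl, hv⟩ | ⟨rfl, rfl⟩ := Sym2.eq_iff.1 heq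
  · exact ⟨by rw [← hpar, ← hpar', hv], rfl⟩
  · rw [hpar] at hw'
    rw [hpar'] at hw
    obtain rfl := h.reflTransGen_antisymm hw'.1.2 hw.1.2
    exact absurd .refl hw.2

/-- A vertex `w` lost below `v` yields, besides the comparable pair `v`, `w`, the incomparable pair
`w`, `heir v`, and all these pairs are distinct. -/
theorem two_mul_sum_card_burnedDescendants_le [DecidableEq V]
    (h : IsPendantForest G H par top rank)
    (hheir : ∀ a b, IsChild H par a b → IsChild H par (heir b) b) :
    2 * ∑ v ∈ Hᶜ, #(burnedDescendants H par heir v) ≤ (#Hᶜ).choose 2 := by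
  set L := Hᶜ.sigma (burnedDescendants H par heir) with hL
  have hmem {q} (hq : q ∈ L) := mem_burnedDescendants.1 (mem_sigma.1 hq).2
  have hchild {q} (hq : q ∈ L) := isChild_heir_of_mem_burnedDescendants hheir (mem_sigma.1 hq).2
  have hheirn {q} (hq : q ∈ L) := h.not_reflTransGen_heir hheir (mem_sigma.1 hq).2
  have hcomp : Set.InjOn (fun q : (_ : V) × V => s(q.1, q.2)) L := by
    rintro ⟨v, w⟩ hq ⟨v', w'⟩ hq' heq
    obtain ⟨rfl, rfl⟩ | ⟨rfl, rfl⟩ := Sym2.eq_iff.1 heq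
    · rfl
    · exact absurd ((hmem hq).1.trans (hmem hq').1) h.not_transGen_self
  have hincomp : Set.InjOn (fun q : (_ : V) × V => s(q.2, heir q.1)) L := by
    rintro ⟨v, w⟩ hq ⟨v', w'⟩ hq' heq
    obtain ⟨rfl, rfl⟩ := h.eq_of_sym2_heir_eq hheir (mem_sigma.1 hq).2 (mem_sigma.1 hq').2 heq
    rfl
  have hdisj : Disjoint (L.image fun q => s(q.1, q.2)) (L.image fun q => s(q.2, heir q.1)) := by
    simp_rw [disjoint_left, mem_image]
    rintro _ ⟨⟨v, w⟩, hq, rfl⟩ ⟨⟨v', w'⟩, hq', heq⟩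
    obtain ⟨rfl, rfl⟩ | ⟨rfl, rfl⟩ := Sym2.eq_iff.1 heq
    · exact hheirn hq' (hmem hq).1.to_reflTransGen
    · exact (hmem hq').2 (hmem hq).1.to_reflTransGen
  have hsub : (L.image fun q => s(q.1, q.2)) ∪ (L.image fun q => s(q.2, heir q.1)) ⊆
      Hᶜ.offDiag.image Sym2.mk.uncurry := by
    simp only [union_subset_iff, image_subset_iff]
    refine ⟨fun q hq => ?_, fun q hq => ?_⟩
    · obtain ⟨hw, hv⟩ := notMem_of_transGen_isChild (hmem hq).1
      exact mem_image_of_mem _ (mem_offDiag.2 ⟨mem_compl.2 hv, mem_compl.2 hw,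
        fun heq : q.1 = q.2 => h.not_transGen_self (heq ▸ (hmem hq).1)⟩)
    · exact mem_image_of_mem _ (mem_offDiag.2
        ⟨mem_compl.2 (notMem_of_transGen_isChild (hmem hq).1).1,
          mem_compl.2 (hchild hq).1, fun heq : q.2 = heir q.1 => hheirn hq (heq ▸ .refl)⟩)
  have hcard := card_le_card hsub
  rw [card_union_of_disjoint hdisj, card_image_of_injOn hcomp, card_image_of_injOn hincomp,
    Sym2.card_image_offDiag, hL, card_sigma] at hcard
  omega

theorem exists_loss [DecidableEq V] (h : IsPendantForest G H par top rank) :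
    ∃ loss : V → ℕ, (∀ v ∉ H, Fintype.card V ≤ sn G (fun _ => 2) v + (1 + loss v)) ∧
      2 * ∑ v ∈ Hᶜ, loss v ≤ (#Hᶜ).choose 2 := by
  have hex : ∀ b, ∃ c, ∀ a, IsChild H par a b → IsChild H par c b := fun b => by
    by_cases hb : ∃ a, IsChild H par a b
    · exact hb.imp fun c hc _ _ => hc
    · exact ⟨b, fun a ha => absurd ⟨a, ha⟩ hb⟩
  choose heir hheir using hex
  exact ⟨fun v => #(burnedDescendants H par heir v),
    fun v hv => h.card_le_sn_add_card_burnedDescendants (fun a b => hheir b a) hv,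
    h.two_mul_sum_card_burnedDescendants_le fun a b => hheir b a⟩

end IsPendantForest

end PendantTrees

section WalkStrategy

variable {V : Type*} {G : SimpleGraph V} {H : Finset V} {u v w x y : V}

theorem exists_walk_forall_not_adj_getVert (p : G.Walk v x) :
    ∃ q : G.Walk v x, q.support ⊆ p.support ∧ q.length ≤ p.length ∧
      ∀ i j, i + 1 < j → j ≤ q.length → ¬ G.Adj (q.getVert i) (q.getVert j) := by
  obtain ⟨q, hq, hmin⟩ := exists_minimalFor_of_wellFoundedLT
    (fun q : G.Walk v x => q.support ⊆ p.support) SimpleGraph.Walk.length ⟨p, List.Subset.refl _⟩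
  have hle {r : G.Walk v x} (hr : r.support ⊆ p.support) : q.length ≤ r.length :=
    (le_total _ _).elim id (hmin hr)
  refine ⟨q, hq, hle (List.Subset.refl _), fun i j hij hj hadj => ?_⟩
  let r := (q.take i).append ((q.drop j).cons hadj)
  have hsupp : r.support ⊆ p.support := by
    intro y hy
    obtain hy | hy := (SimpleGraph.Walk.mem_support_append_iff _ _).1 hy
    · exact hq ((q.isSubwalk_take i).support_subset hy)
    · obtain rfl | hy := List.mem_cons.1 hy
      · exact hq (q.getVert_mem_support i)
      · exact hq ((q.isSubwalk_drop j).support_subset hy)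
  have hlen : r.length = min i q.length + (q.length - j + 1) := by simp [r]
  have := hle hsupp
  omega

open Classical in
/-- The vertices of `H` off the walk `p` to which the fire would spread first from the vertex
`p.getVert t`, if it runs along `p`. -/
noncomputable def freshNeighbors (H : Finset V) (p : G.Walk v x) (t : ℕ) : Finset V :=
  {y ∈ neighborsIn G H (p.getVert t) | y ∉ p.support ∧ ∀ j < t, ¬ G.Adj (p.getVert j) y}

theorem mem_freshNeighbors {p : G.Walk v x} {t : ℕ} :
    y ∈ freshNeighbors H p t ↔ y ∈ neighborsIn G H (p.getVert t) ∧ y ∉ p.support ∧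
      ∀ j < t, ¬ G.Adj (p.getVert j) y := by
  simp [freshNeighbors]

theorem freshNeighbors_eq_empty {p : G.Walk v x} {t : ℕ} (ht : p.length < t) :
    freshNeighbors H p t = ∅ := by
  refine eq_empty_of_forall_notMem fun _ hy => ?_
  obtain ⟨hy, -, hj⟩ := mem_freshNeighbors.1 hy
  refine hj _ ht ?_
  rw [p.getVert_length, ← p.getVert_of_length_le ht.le]
  exact (mem_neighborsIn.1 hy).2

theorem card_freshNeighbors_lt {p : G.Walk v x} {t : ℕ} (hu : u ∈ neighborsIn G H (p.getVert t))
    (hup : u ∈ p.support) : #(freshNeighbors H p t) < #(neighborsIn G H (p.getVert t)) :=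
  card_lt_card ((ssubset_iff_of_subset fun _ hy => (mem_freshNeighbors.1 hy).1).2
    ⟨u, hu, fun h => (mem_freshNeighbors.1 h).2.1 hup⟩)

theorem card_freshNeighbors_add_two_le {p : G.Walk v x} {t : ℕ}
    (hu : u ∈ neighborsIn G H (p.getVert t)) (hup : u ∈ p.support)
    (hw : w ∈ neighborsIn G H (p.getVert t)) (hwp : w ∉ freshNeighbors H p t) (huw : u ≠ w) :
    #(freshNeighbors H p t) + 2 ≤ #(neighborsIn G H (p.getVert t)) := by
  classical
  have hup' : u ∉ freshNeighbors H p t := fun h => (mem_freshNeighbors.1 h).2.1 hup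
  rw [← card_pair huw, ← card_union_of_disjoint (by simp [hup', hwp])]
  refine card_le_card (union_subset (fun _ hy => (mem_freshNeighbors.1 hy).1) ?_)
  simp [insert_subset_iff, hu, hw]

theorem getVert_ne_getVert_add_two {p : G.Walk v x} (hvx : x ≠ v)
    (hp : ∀ i j, i + 1 < j → j ≤ p.length → ¬ G.Adj (p.getVert i) (p.getVert j)) {t : ℕ}
    (ht : t + 2 ≤ p.length) : p.getVert t ≠ p.getVert (t + 2) := by
  intro heq
  obtain _ | t := t
  · obtain hlt | hlength := ht.lt_or_eq
    · exact hp 0 3 (by simp) hlt (heq ▸ p.adj_getVert_succ hlt)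
    · exact hvx (by rw [← p.getVert_length, ← hlength, ← heq, p.getVert_zero])
  · exact hp t (t + 3) (by omega) ht (heq ▸ p.adj_getVert_succ (by omega))

/-- Every vertex after the first has lost one neighbour to the fire already, every vertex before
the last another one to the walk. -/
theorem card_freshNeighbors_le_two {p : G.Walk v x} (hvx : x ≠ v) (hH : ∀ y ∈ p.support, y ∈ H)
    (hp : ∀ i j, i + 1 < j → j ≤ p.length → ¬ G.Adj (p.getVert i) (p.getVert j))
    (hdeg : ∀ y ∈ p.support, #(neighborsIn G H y) ≤ 4) (hv : #(neighborsIn G H v) ≤ 3)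
    (hx : #(neighborsIn G H x) ≤ 3 ∨
      ∃ e ∈ neighborsIn G H v, e ∈ neighborsIn G H x ∧ e ∉ p.support) (t : ℕ) :
    #(freshNeighbors H p t) ≤ 2 := by
  have hmem {i : ℕ} : p.getVert i ∈ p.support := p.getVert_mem_support i
  have hnext {i : ℕ} (hi : i < p.length) :
      p.getVert (i + 1) ∈ neighborsIn G H (p.getVert i) :=
    mem_neighborsIn.2 ⟨hH _ hmem, p.adj_getVert_succ hi⟩
  have hprev {i : ℕ} (hi : i < p.length) :
      p.getVert i ∈ neighborsIn G H (p.getVert (i + 1)) :=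
    mem_neighborsIn.2 ⟨hH _ hmem, (p.adj_getVert_succ hi).symm⟩
  have hfirst : p.getVert 0 = v := p.getVert_zero
  obtain ht | ht := lt_or_ge p.length t
  · simp [freshNeighbors_eq_empty ht]
  obtain _ | t := t
  · have hlength : 0 < p.length := by
      by_contra! hle
      exact hvx (by rw [← p.getVert_length, Nat.le_zero.1 hle, hfirst])
    have := card_freshNeighbors_lt (hnext hlength) hmem
    rw [hfirst] at this
    omega
  obtain hlt | heq := ht.lt_or_eq
  · have := card_freshNeighbors_add_two_le (hprev ht) hmem (hnext hlt)
      (fun h => (mem_freshNeighbors.1 h).2.1 hmem) (getVert_ne_getVert_add_two hvx hp hlt)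
    have := hdeg _ (hmem (i := t + 1))
    omega
  · have hxt : p.getVert (t + 1) = x := heq ▸ p.getVert_length
    have hdegx := hdeg x p.end_mem_support
    obtain hx | ⟨e, hev, hex, hep⟩ := hx
    · have := card_freshNeighbors_lt (hprev ht) hmem
      rw [hxt] at this
      omega
    · have hburn : e ∉ freshNeighbors H p (t + 1) := fun h =>
        (mem_freshNeighbors.1 h).2.2 0 t.succ_pos (hfirst.symm ▸ (mem_neighborsIn.1 hev).2)
      have := card_freshNeighbors_add_two_le (hprev ht) hmem (hxt.symm ▸ hex) hburn
        fun h => hep (h ▸ hmem)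
      rw [hxt] at this
      omega

theorem IsPendantForest.card_le_sn_add_of_walk [Fintype V] [DecidableEq V] {par top : V → V}
    {rank : V → ℕ} (h : IsPendantForest G H par top rank) (p : G.Walk v x) (hvx : x ≠ v)
    (hp : ∀ y ∈ p.support, y ∈ H ∧ #(neighborsIn G H y) ≤ 4) (hv : #(neighborsIn G H v) ≤ 3)
    (hx : #(neighborsIn G H x) ≤ 3 ∨
      ∃ e ∈ neighborsIn G H v, e ∈ neighborsIn G H x ∧ e ∉ p.support) :
    Fintype.card V ≤ sn G (fun _ => 2) v + (p.length + 1 + #Hᶜ) := by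
  obtain ⟨q, hqp, hlen, hq⟩ := exists_walk_forall_not_adj_getVert p
  have hqH : ∀ y ∈ q.support, y ∈ H := fun y hy => (hp y (hqp hy)).1
  have hfresh : ∀ t, #(freshNeighbors H q t) ≤ 2 := card_freshNeighbors_le_two hvx hqH hq
    (fun y hy => (hp y (hqp hy)).2) hv (hx.imp_right fun ⟨e, hev, hex, hep⟩ =>
      ⟨e, hev, hex, fun he => hep (hqp he)⟩)
  have hburn := h.card_le_sn_add_card (C := q.support.toFinset) (τ := q.support.idxOf) hfresh
    (fun t y hy => ⟨(mem_neighborsIn.1 (mem_freshNeighbors.1 hy).1).1,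
      by simpa using (mem_freshNeighbors.1 hy).2.1⟩) (hqH v q.start_mem_support) (by simp)
    (by rw [← q.cons_tail_support, List.idxOf_cons_self]) ?_
  · have hsub : ({y | top y ∈ q.support.toFinset} : Finset V) ⊆ q.support.toFinset ∪ Hᶜ := by
      intro y hy
      by_cases hyH : y ∈ H
      · simpa [h.top_of_mem y hyH, hyH] using hy
      · simp [hyH]
    have hcard := (card_le_card hsub).trans (card_union_le _ _)
    have hsupp := q.support.toFinset_card_le
    rw [q.length_support] at hsupp
    omega
  · intro y hy z hz
    rw [List.mem_toFinset] at hy ⊢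
    have hadj : G.Adj (q.getVert (q.support.idxOf y)) z := by
      rw [q.getVert_support_idxOf hy]
      exact (mem_neighborsIn.1 hz).2
    by_cases hzq : z ∈ q.support
    · refine .inl ⟨hzq, not_lt.1 fun hlt => hq _ _ hlt ?_ ?_⟩
      · have := List.idxOf_lt_length_iff.2 hzq
        rw [q.length_support] at this
        omega
      · rwa [q.getVert_support_idxOf hzq]
    · obtain ⟨s, ⟨hs, hsz⟩, hmin⟩ := exists_minimalFor_of_wellFoundedLT
        (fun s => s ≤ q.support.idxOf y ∧ G.Adj (q.getVert s) z) id ⟨_, le_rfl, hadj⟩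
      refine .inr ⟨s, hs, mem_freshNeighbors.2
        ⟨mem_neighborsIn.2 ⟨(mem_neighborsIn.1 hz).1, hsz⟩, hzq, fun j hj hjz => ?_⟩⟩
      exact hj.not_ge (hmin ⟨hj.le.trans hs, hjz⟩ hj.le)

/-- The vertices of degree three in the core from which no short walk leads to a vertex where the
fire can be stopped as in `IsPendantForest.card_le_sn_add_of_walk`. -/
def IsSecluded (G : SimpleGraph V) (H : Finset V) (v : V) : Prop :=
  v ∈ H ∧ #(neighborsIn G H v) = 3 ∧ ∀ x ≠ v, ∀ p : G.Walk v x, p.length ≤ 4 →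
    (∀ y ∈ p.support, y ∈ H ∧ #(neighborsIn G H y) ≤ 4) → 4 ≤ #(neighborsIn G H x) ∧
      ∀ e ∈ neighborsIn G H v, e ∈ neighborsIn G H x → e ∈ p.support

theorem IsPendantForest.card_le_sn_add_of_not_isSecluded [Fintype V] [DecidableEq V]
    {par top : V → V} {rank : V → ℕ} (h : IsPendantForest G H par top rank) (hv : v ∈ H)
    (hdeg : #(neighborsIn G H v) = 3) (hsec : ¬ IsSecluded G H v) :
    Fintype.card V ≤ sn G (fun _ => 2) v + (5 + #Hᶜ) := by
  by_contra! hlt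
  refine hsec ⟨hv, hdeg, fun x hxv p hlen hp => by_contra fun hend => ?_⟩
  have hwalk := h.card_le_sn_add_of_walk p hxv hp hdeg.le (by by_contra! hx; exact hend hx)
  omega

end WalkStrategy

section Discharging

variable {V : Type*} {G : SimpleGraph V} {H : Finset V} {u u' v v' x y : V}

theorem mem_neighborsIn_comm (hx : x ∈ H) (hxy : y ∈ neighborsIn G H x) : x ∈ neighborsIn G H y :=
  mem_neighborsIn.2 ⟨hx, (mem_neighborsIn.1 hxy).2.symm⟩

theorem sum_card_filter_neighborsIn_comm (p q : V → Prop) [DecidablePred p] [DecidablePred q] :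
    ∑ x ∈ H with p x, #{y ∈ neighborsIn G H x | q y} =
      ∑ y ∈ H with q y, #{x ∈ neighborsIn G H y | p x} := by
  classical
  have := sum_card_bipartiteAbove_eq_sum_card_bipartiteBelow (s := {x ∈ H | p x})
    (t := {y ∈ H | q y}) G.Adj
  convert this using 3 <;> ext <;>
    simp only [mem_filter, mem_neighborsIn, bipartiteAbove, bipartiteBelow, G.adj_comm] <;> tauto

theorem IsSecluded.four_le_card (hv : IsSecluded G H v) (hu : u ∈ neighborsIn G H v) :
    4 ≤ #(neighborsIn G H u) := by
  obtain ⟨hvH, hv3, hwalk⟩ := hv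
  obtain ⟨huH, hadj⟩ := mem_neighborsIn.1 hu
  by_contra! hlt
  exact hlt.not_ge
    (hwalk u hadj.ne' hadj.toWalk (by simp) (by simp [hvH, huH, hv3, hlt.le])).1

theorem card_eq_card_filter_add_card_filter {s : Finset V}
    (hs : ∀ y ∈ s, 4 ≤ #(neighborsIn G H y)) :
    #s = #{y ∈ s | #(neighborsIn G H y) = 4} + #{y ∈ s | 5 ≤ #(neighborsIn G H y)} := by
  rw [← card_filter_add_card_filter_not (s := s) fun y => #(neighborsIn G H y) = 4]
  congr 2
  exact filter_congr fun y hy => by have := hs y hy; omega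

/-- A pair for which the discharging argument collects four units of charge, from `u` and the
neighbours of `u` other than `v`. -/
structure IsClaim (G : SimpleGraph V) (H : Finset V) (v u : V) : Prop where
  isSecluded : IsSecluded G H v
  mem : u ∈ neighborsIn G H v
  card_eq : #(neighborsIn G H u) = 4

variable [DecidableEq V]

/-- The vertices that contribute to the charge collected for the pair `(v, u)`. -/
noncomputable def donors (G : SimpleGraph V) (H : Finset V) (v u : V) : Finset V :=
  (insert u (neighborsIn G H u)).erase v

namespace IsClaim

theorem card_donors (h : IsClaim G H v u) : #(donors G H v u) = 4 := by
  have hvu := mem_neighborsIn_comm h.isSecluded.1 h.mem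
  rw [donors, card_erase_of_mem (mem_insert_of_mem hvu),
    card_insert_of_notMem (by simp [mem_neighborsIn]), Nat.add_sub_cancel, h.card_eq]

theorem self_mem_donors (h : IsClaim G H v u) : u ∈ donors G H v u :=
  mem_erase.2 ⟨(mem_neighborsIn.1 h.mem).2.ne', mem_insert_self _ _⟩

theorem mem_of_mem_donors (h : IsClaim G H v u) (hy : y ∈ donors G H v u) : y ∈ H := by
  obtain rfl | hyu := mem_insert.1 (mem_of_mem_erase hy)
  exacts [(mem_neighborsIn.1 h.mem).1, (mem_neighborsIn.1 hyu).1]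

theorem exists_walk (h : IsClaim G H v u) (hy : y ∈ donors G H v u)
    (hdeg : #(neighborsIn G H y) ≤ 4) : ∃ p : G.Walk v y, p.length ≤ 2 ∧
      (∀ z ∈ p.support, z = v ∨ z = u ∨ z = y) ∧
      ∀ z ∈ p.support, z ∈ H ∧ #(neighborsIn G H z) ≤ 4 := by
  have hvu := (mem_neighborsIn.1 h.mem).2
  obtain ⟨p, hlength, hp⟩ : ∃ p : G.Walk v y, p.length ≤ 2 ∧
      ∀ z ∈ p.support, z = v ∨ z = u ∨ z = y := by
    obtain rfl | hyu := mem_insert.1 (mem_of_mem_erase hy)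
    · exact ⟨hvu.toWalk, by simp, by simp⟩
    · exact ⟨.cons hvu (mem_neighborsIn.1 hyu).2.toWalk, by simp, by simp⟩
  refine ⟨p, hlength, hp, fun z hz => ?_⟩
  obtain rfl | rfl | rfl := hp z hz
  · exact ⟨h.isSecluded.1, h.isSecluded.2.1.le.trans (by norm_num)⟩
  · exact ⟨(mem_neighborsIn.1 h.mem).1, h.card_eq.le⟩
  · exact ⟨h.mem_of_mem_donors hy, hdeg⟩

theorem four_le_card_of_mem_donors (h : IsClaim G H v u) (hy : y ∈ donors G H v u) :
    4 ≤ #(neighborsIn G H y) := by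
  by_contra! hlt
  obtain ⟨p, hlength, -, hp⟩ := h.exists_walk hy hlt.le
  exact hlt.not_ge (h.isSecluded.2.2 y (ne_of_mem_erase hy) p (by omega) hp).1

theorem eq_left_of_mem_donors (h : IsClaim G H v u) (h' : IsClaim G H v' u')
    (hy : y ∈ donors G H v u) (hy' : y ∈ donors G H v' u') (hdeg : #(neighborsIn G H y) ≤ 4) :
    v = v' := by
  by_contra! hne
  obtain ⟨p, hlength, -, hp⟩ := h.exists_walk hy hdeg
  obtain ⟨p', hlength', -, hp'⟩ := h'.exists_walk hy' hdeg
  have hfour := (h.isSecluded.2.2 v' hne.symm (p.append p'.reverse) (by simp; omega) fun z hz => by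
    obtain hz | hz := (SimpleGraph.Walk.mem_support_append_iff _ _).1 hz
    exacts [hp z hz, hp' z (by simpa using hz)]).1
  exact absurd h'.isSecluded.2.1 (by omega)

omit [DecidableEq V] in
theorem eq_left (h : IsClaim G H v u) (h' : IsClaim G H v' u) : v = v' := by
  classical
  exact h.eq_left_of_mem_donors h' h.self_mem_donors h'.self_mem_donors h.card_eq.le

theorem eq_or_eq_of_mem_donors (h : IsClaim G H v u) (h' : IsClaim G H v u')
    (hy : y ∈ donors G H v u) (hy' : y ∈ donors G H v u') (hdeg : #(neighborsIn G H y) ≤ 4) :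
    u' = u ∨ u' = y := by
  obtain ⟨p, hlength, hsupp, hp⟩ := h.exists_walk hy hdeg
  obtain heq | hyu := mem_insert.1 (mem_of_mem_erase hy')
  · exact .inr heq.symm
  have hmem := (h.isSecluded.2.2 y (ne_of_mem_erase hy) p (by omega) hp).2 u' h'.mem
    (mem_neighborsIn_comm (mem_neighborsIn.1 h'.mem).1 hyu)
  exact (hsupp u' hmem).resolve_left (mem_neighborsIn.1 h'.mem).2.ne'

theorem eq_right_of_mem_donors (h : IsClaim G H v u) (h' : IsClaim G H v u')
    (hy : y ∈ donors G H v u) (hy' : y ∈ donors G H v u') (hdeg : #(neighborsIn G H y) ≤ 4) :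
    u = u' := by
  obtain hu' | rfl := h.eq_or_eq_of_mem_donors h' hy hy' hdeg
  · exact hu'.symm
  · exact (h'.eq_or_eq_of_mem_donors h hy' hy hdeg).elim id id

end IsClaim

theorem sum_card_donors_four_le (D : Finset (Σ _ : V, V)) (hD : ∀ d ∈ D, IsClaim G H d.1 d.2) :
    ∑ d ∈ D, #{y ∈ donors G H d.1 d.2 | #(neighborsIn G H y) = 4} ≤
      #{y ∈ H | #(neighborsIn G H y) = 4} := by
  rw [← card_biUnion fun d hd d' hd' hne => disjoint_left.2 fun y hy hy' => hne ?_]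
  · refine card_le_card (biUnion_subset.2 fun d hd y hy => ?_)
    obtain ⟨hy, hdeg⟩ := mem_filter.1 hy
    exact mem_filter.2 ⟨(hD d hd).mem_of_mem_donors hy, hdeg⟩
  · obtain ⟨⟨hy, hdeg⟩, hy', -⟩ := mem_filter.1 hy, mem_filter.1 hy'
    have h := hD d hd
    have h' := hD d' hd'
    have hleft := h.eq_left_of_mem_donors h' hy hy' hdeg.le
    rw [← hleft] at h' hy'
    exact Sigma.ext hleft (heq_of_eq (h.eq_right_of_mem_donors h' hy hy' hdeg.le))

theorem sum_card_donors_five_le (D : Finset (Σ _ : V, V)) (hD : ∀ d ∈ D, IsClaim G H d.1 d.2) :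
    ∑ d ∈ D, #{y ∈ donors G H d.1 d.2 | 5 ≤ #(neighborsIn G H y)} ≤
      ∑ y ∈ H with 5 ≤ #(neighborsIn G H y),
        #{u ∈ neighborsIn G H y | #(neighborsIn G H u) = 4} := by
  rw [← sum_card_filter_neighborsIn_comm]
  have hinj : Set.InjOn Sigma.snd (D : Set (Σ _ : V, V)) := by
    intro d hd d' hd' heq
    have h' := hD d' hd'
    rw [← show d.2 = d'.2 from heq] at h'
    exact Sigma.ext ((hD d hd).eq_left h') (heq_of_eq heq)
  calc _ ≤ ∑ d ∈ D, #{y ∈ neighborsIn G H d.2 | 5 ≤ #(neighborsIn G H y)} := by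
        refine sum_le_sum fun d hd => card_le_card fun y hy => ?_
        obtain ⟨hy, hdeg⟩ := mem_filter.1 hy
        refine mem_filter.2 ⟨(mem_insert.1 (mem_of_mem_erase hy)).resolve_left ?_, hdeg⟩
        rintro rfl
        have := (hD d hd).card_eq
        omega
    _ = ∑ u ∈ D.image Sigma.snd, #{y ∈ neighborsIn G H u | 5 ≤ #(neighborsIn G H y)} :=
        (sum_image (f := fun u => #{y ∈ neighborsIn G H u | 5 ≤ #(neighborsIn G H y)}) hinj).symm
    _ ≤ _ := by
        refine sum_le_sum_of_subset (image_subset_iff.2 fun d hd => ?_)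
        exact mem_filter.2 ⟨(mem_neighborsIn.1 (hD d hd).mem).1, (hD d hd).card_eq⟩

omit [DecidableEq V] in
theorem four_mul_card_le_of_isClaim (D : Finset (Σ _ : V, V)) (hD : ∀ d ∈ D, IsClaim G H d.1 d.2) :
    4 * #D ≤ #{y ∈ H | #(neighborsIn G H y) = 4} +
      ∑ y ∈ H with 5 ≤ #(neighborsIn G H y),
        #{u ∈ neighborsIn G H y | #(neighborsIn G H u) = 4} := by
  classical
  refine le_trans (le_of_eq ?_)
    (add_le_add (sum_card_donors_four_le D hD) (sum_card_donors_five_le D hD))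
  rw [← sum_add_distrib, mul_comm, ← smul_eq_mul, ← sum_const]
  refine sum_congr rfl fun d hd => (hD d hd).card_donors.symm.trans ?_
  exact card_eq_card_filter_add_card_filter fun y => (hD d hd).four_le_card_of_mem_donors

omit [DecidableEq V] in
theorem twelve_mul_card_isSecluded_le [DecidablePred (IsSecluded G H)] :
    12 * #{v ∈ H | IsSecluded G H v} ≤ #{v ∈ H | #(neighborsIn G H v) = 4} +
      4 * ∑ x ∈ H with 5 ≤ #(neighborsIn G H x), #(neighborsIn G H x) := by
  classical
  let S : Finset V := {v ∈ H | IsSecluded G H v}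
  let D : Finset (Σ _ : V, V) :=
    S.sigma fun v => {u ∈ neighborsIn G H v | #(neighborsIn G H u) = 4}
  have hS {v : V} (hv : v ∈ S) : IsSecluded G H v := (mem_filter.1 hv).2
  have hD := four_mul_card_le_of_isClaim D fun d hd => by
    obtain ⟨hv, hu⟩ := mem_sigma.1 hd
    exact ⟨hS hv, (mem_filter.1 hu).1, (mem_filter.1 hu).2⟩
  have hdarts : 3 * #S = #D + ∑ v ∈ S, #{u ∈ neighborsIn G H v | 5 ≤ #(neighborsIn G H u)} := by
    rw [card_sigma, ← sum_add_distrib, mul_comm, ← smul_eq_mul, ← sum_const]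
    exact sum_congr rfl fun v hv => (hS hv).2.1.symm.trans
      (card_eq_card_filter_add_card_filter fun u hu => (hS hv).four_le_card hu)
  have hbig : ∑ v ∈ S, #{u ∈ neighborsIn G H v | 5 ≤ #(neighborsIn G H u)} ≤
      ∑ y ∈ H with 5 ≤ #(neighborsIn G H y),
        #{x ∈ neighborsIn G H y | #(neighborsIn G H x) = 3} := by
    rw [← sum_card_filter_neighborsIn_comm (fun x => #(neighborsIn G H x) = 3)]
    exact sum_le_sum_of_subset fun v hv => mem_filter.2 ⟨(hS hv).1, (hS hv).2.1⟩
  have hsplit : ∑ y ∈ H with 5 ≤ #(neighborsIn G H y),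
        (#{x ∈ neighborsIn G H y | #(neighborsIn G H x) = 3} +
          #{x ∈ neighborsIn G H y | #(neighborsIn G H x) = 4}) ≤
      ∑ y ∈ H with 5 ≤ #(neighborsIn G H y), #(neighborsIn G H y) := by
    refine sum_le_sum fun y _ => ?_
    rw [← card_union_of_disjoint (disjoint_filter.2 fun x _ h3 h4 => by omega)]
    exact card_le_card (union_subset (filter_subset _ _) (filter_subset _ _))
  rw [sum_add_distrib] at hsplit
  change 12 * #S ≤ _
  omega

end Discharging

section Averaging

variable {V : Type*} [Fintype V] {G : SimpleGraph V} {H : Finset V}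
  {par top : V → V} {rank : V → ℕ} {v : V}

theorem card_neighborsIn_lt_card (G : SimpleGraph V) (H : Finset V) (v : V) :
    #(neighborsIn G H v) < Fintype.card V :=
  card_lt_univ_of_notMem fun hv => G.irrefl (mem_neighborsIn.1 hv).2

theorem sum_card_neighborsIn_univ (G : SimpleGraph V) :
    ∑ x, #(neighborsIn G univ x) = 2 * Nat.card G.edgeSet := by
  classical
  rw [Nat.card_eq_fintype_card, ← SimpleGraph.edgeFinset_card,
    ← SimpleGraph.sum_degrees_eq_twice_card_edges]
  refine sum_congr rfl fun x _ => ?_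
  rw [← SimpleGraph.card_neighborFinset_eq_degree]
  congr 1
  ext y
  simp [mem_neighborsIn]

variable [DecidableEq V]

theorem IsPendantForest.sum_card_filter_top (h : IsPendantForest G H par top rank) :
    ∑ v ∈ H, #{x | top x = v} = Fintype.card V :=
  (card_eq_sum_card_fiberwise fun x _ => h.top_mem x).symm

/-- The bound to be established for the sum over the core `H` of `sn` plus the sizes of the pendant
trees. The subtracted term is what the vertices outside `H` save beyond their share. -/
noncomputable def coreTarget (G : SimpleGraph V) (H : Finset V) : ℝ :=
  ∑ v ∈ H, Fintype.card V * (1 - 2 * #(neighborsIn G H v) / 9 : ℝ) -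
    (4 * #Hᶜ * Fintype.card V / 9 - #Hᶜ * (#Hᶜ + 3) / 4)

theorem coreTarget_eq (G : SimpleGraph V) (H : Finset V) :
    coreTarget G H =
      Fintype.card V * (#H - 2 * ((∑ v ∈ H, #(neighborsIn G H v) : ℕ) : ℝ) / 9) -
        (4 * #Hᶜ * Fintype.card V / 9 - #Hᶜ * (#Hᶜ + 3) / 4) := by
  rw [coreTarget, ← mul_sum, sum_sub_distrib, ← sum_div, ← mul_sum]
  simp

theorem IsPendantForest.le_sum_compl_sn (h : IsPendantForest G H par top rank) :
    (#Hᶜ * Fintype.card V - #Hᶜ * (#Hᶜ + 3) / 4 : ℝ) ≤ ∑ v ∈ Hᶜ, (sn G (fun _ => 2) v : ℝ) := by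
  obtain ⟨loss, hsn, hloss⟩ := h.exists_loss
  have hsum := sum_le_sum fun v hv => hsn v (mem_compl.1 hv)
  simp only [sum_add_distrib, sum_const, smul_eq_mul, mul_one] at hsum
  have hloss' : 2 * ∑ v ∈ Hᶜ, (loss v : ℝ) ≤ #Hᶜ * (#Hᶜ - 1) / 2 := by
    rw [← Nat.cast_choose_two]
    exact_mod_cast hloss
  have hsum' : (#Hᶜ * Fintype.card V : ℝ) ≤
      ∑ v ∈ Hᶜ, (sn G (fun _ => 2) v : ℝ) + (#Hᶜ + ∑ v ∈ Hᶜ, (loss v : ℝ)) := by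
    exact_mod_cast hsum
  linarith

theorem IsPendantForest.le_sum_sn (h : IsPendantForest G H par top rank)
    (hedges : ∑ v ∈ H, #(neighborsIn G H v) + 2 * #Hᶜ = 2 * Nat.card G.edgeSet)
    (hcore : coreTarget G H ≤ ∑ v ∈ H, ((sn G (fun _ => 2) v + #{x | top x = v} : ℕ) : ℝ)) :
    (Fintype.card V * (Fintype.card V - 4 * Nat.card G.edgeSet / 9) - Fintype.card V : ℝ) ≤
      ∑ v, (sn G (fun _ => 2) v : ℝ) := by
  have hcompl := h.le_sum_compl_sn
  have htop : (∑ v ∈ H, #{x | top x = v} : ℝ) = Fintype.card V := by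
    exact_mod_cast h.sum_card_filter_top
  have hcard : (#H + #Hᶜ : ℝ) = Fintype.card V := by exact_mod_cast card_add_card_compl H
  have hedges' : (Nat.card G.edgeSet : ℝ) =
      (((∑ v ∈ H, #(neighborsIn G H v) : ℕ) : ℝ) + 2 * #Hᶜ) / 2 := by
    rw [eq_div_iff two_ne_zero, mul_comm]
    exact_mod_cast hedges.symm
  simp only [Nat.cast_add, sum_add_distrib, coreTarget_eq, htop] at hcore
  rw [← sum_add_sum_compl H, hedges', ← hcard]
  rw [← hcard] at hcore hcompl
  linarith

theorem IsPendantForest.coreTarget_le_of_singleton {r : V}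
    (h : IsPendantForest G {r} par top rank) :
    coreTarget G {r} ≤ ∑ v ∈ {r}, ((sn G (fun _ => 2) v + #{x | top x = v} : ℕ) : ℝ) := by
  have htop := h.sum_card_filter_top
  have hcard := card_add_card_compl {r}
  rw [sum_singleton] at htop ⊢
  rw [card_singleton] at hcard
  have hsn : min 2 #({r} : Finset V)ᶜ ≤ sn G (fun _ => 2) r := by
    simpa [← hcard] using min_le_sn G (fun _ => 2) r
  rw [htop, coreTarget_eq, ← hcard]
  push_cast [card_singleton]
  have hmin : (#({r} : Finset V)ᶜ * (11 - 7 * #({r} : Finset V)ᶜ) / 36 : ℝ) ≤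
      sn G (fun _ => 2) r := by
    refine le_trans (le_min ?_ ?_) (Nat.cast_min (α := ℝ) 2 _ ▸ Nat.cast_le.2 hsn)
    · push_cast
      nlinarith [sq_nonneg (14 * #({r} : Finset V)ᶜ - 11 : ℝ)]
    · nlinarith
  have hdeg : (0 : ℝ) ≤ (1 + #({r} : Finset V)ᶜ) * ∑ v ∈ {r}, (#(neighborsIn G {r} v) : ℝ) := by
    positivity
  linarith

end Averaging

section Regimes

variable {V : Type*} {G : SimpleGraph V} {H : Finset V} {par top : V → V} {rank : V → ℕ} {v : V}

open Classical in
/-- The weight of the core vertex `v` in the inequality `twelve_mul_card_isSecluded_le`. -/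
noncomputable def dischargeWeight (G : SimpleGraph V) (H : Finset V) (v : V) : ℝ :=
  (if #(neighborsIn G H v) = 4 then 1 else 0) +
    (if 5 ≤ #(neighborsIn G H v) then 4 * (#(neighborsIn G H v) : ℝ) else 0) -
    (if IsSecluded G H v then 12 else 0)

theorem sum_dischargeWeight_nonneg (G : SimpleGraph V) (H : Finset V) :
    0 ≤ ∑ v ∈ H, dischargeWeight G H v := by
  classical
  have h : (12 * #{v ∈ H | IsSecluded G H v} : ℝ) ≤ #{v ∈ H | #(neighborsIn G H v) = 4} +
      4 * ∑ x ∈ H with 5 ≤ #(neighborsIn G H x), (#(neighborsIn G H x) : ℝ) := by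
    exact_mod_cast twelve_mul_card_isSecluded_le
  simp only [dischargeWeight, sum_sub_distrib, sum_add_distrib, ← sum_filter, sum_const,
    ← mul_sum, nsmul_eq_mul]
  linarith

variable [Fintype V] [DecidableEq V]

theorem IsPendantForest.le_sn_add_of_few_pendants (h : IsPendantForest G H par top rank)
    (hG : G.Connected) (hplanar : IsPlanar G) (hv : v ∈ H) (hdeg : 2 ≤ #(neighborsIn G H v))
    (hfew : 45 * (#Hᶜ + 3) ≤ 14 * Fintype.card V) :
    (Fintype.card V * (167 - 42 * #(neighborsIn G H v) + dischargeWeight G H v) / 90 : ℝ) ≤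
      ((sn G (fun _ => 2) v + #{x | top x = v} : ℕ) : ℝ) := by
  have hn : (0 : ℝ) ≤ Fintype.card V := Nat.cast_nonneg _
  have hp : (0 : ℝ) ≤ #Hᶜ := Nat.cast_nonneg _
  have hfew' : (45 * (#Hᶜ + 3) : ℝ) ≤ 14 * Fintype.card V := by exact_mod_cast hfew
  have hsec : IsSecluded G H v → #(neighborsIn G H v) = 3 := fun h => h.2.1
  push_cast
  obtain hd | hd | hd | hd : #(neighborsIn G H v) = 2 ∨ #(neighborsIn G H v) = 3 ∨
      #(neighborsIn G H v) = 4 ∨ 5 ≤ #(neighborsIn G H v) := by omega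
  · have hsn : (Fintype.card V : ℝ) ≤ sn G (fun _ => 2) v + #{x | top x = v} := by
      exact_mod_cast h.card_le_sn_add_of_card_le_two hv hd.le
    have hns : ¬ IsSecluded G H v := fun hs => by grind
    simp only [dischargeWeight, hd, hns]
    norm_num
    linarith
  · by_cases hs : IsSecluded G H v
    · have hsn : (Fintype.card V : ℝ) ≤ 3 * sn G (fun _ => 2) v + #{x | top x = v} := by
        exact_mod_cast h.card_le_three_mul_sn_add hG hplanar hv hd.le
      simp only [dischargeWeight, hd, hs]
      norm_num
      linarith
    · have hsn : (Fintype.card V : ℝ) ≤ sn G (fun _ => 2) v + (5 + #Hᶜ) := by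
        exact_mod_cast h.card_le_sn_add_of_not_isSecluded hv hd hs
      simp only [dischargeWeight, hd, hs]
      norm_num
      linarith
  · have hns : ¬ IsSecluded G H v := fun hs => by grind
    simp only [dischargeWeight, hd, hns]
    norm_num
    positivity
  · have hns : ¬ IsSecluded G H v := fun hs => by grind
    have hd' : (5 : ℝ) ≤ #(neighborsIn G H v) := by exact_mod_cast hd
    rw [dischargeWeight, if_neg (by omega), if_pos hd, if_neg hns]
    refine le_trans (div_nonpos_of_nonpos_of_nonneg
      (mul_nonpos_of_nonneg_of_nonpos hn (by linarith)) (by norm_num)) (by positivity)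

theorem IsPendantForest.coreTarget_le_of_few_pendants (h : IsPendantForest G H par top rank)
    (hG : G.Connected) (hplanar : IsPlanar G) (hdeg : ∀ v ∈ H, 2 ≤ #(neighborsIn G H v))
    (hfew : 45 * (#Hᶜ + 3) ≤ 14 * Fintype.card V)
    (hsum : 22 * ∑ v ∈ H, #(neighborsIn G H v) ≤ 77 * #H + 33 * #Hᶜ) :
    coreTarget G H ≤ ∑ v ∈ H, ((sn G (fun _ => 2) v + #{x | top x = v} : ℕ) : ℝ) := by
  refine le_trans ?_ (sum_le_sum fun v hv =>
    h.le_sn_add_of_few_pendants hG hplanar hv (hdeg v hv) hfew)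
  have hn : (0 : ℝ) ≤ Fintype.card V := Nat.cast_nonneg _
  have hfew' : (0 : ℝ) ≤ #Hᶜ * (14 * Fintype.card V - 45 * (#Hᶜ + 3)) :=
    mul_nonneg (Nat.cast_nonneg _) (sub_nonneg.2 (by exact_mod_cast hfew))
  have hsum' : (0 : ℝ) ≤ Fintype.card V *
      (77 * #H + 33 * #Hᶜ - 22 * ∑ v ∈ H, (#(neighborsIn G H v) : ℝ)) :=
    mul_nonneg hn (sub_nonneg.2 (by exact_mod_cast hsum))
  have hweight := mul_nonneg hn (sum_dischargeWeight_nonneg G H)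
  rw [← sum_div, ← mul_sum, sum_add_distrib, sum_sub_distrib, ← mul_sum, coreTarget_eq, sum_const,
    nsmul_eq_mul]
  push_cast
  linarith

theorem IsPendantForest.le_sn_add_of_two_le_card (h : IsPendantForest G H par top rank)
    (hG : G.Connected) (hplanar : IsPlanar G) (hv : v ∈ H) (hdeg : 2 ≤ #(neighborsIn G H v)) :
    (Fintype.card V * (1 - 2 * #(neighborsIn G H v) / 9) -
        max 0 (Fintype.card V / 9 - 3 : ℝ) : ℝ) ≤
      ((sn G (fun _ => 2) v + #{x | top x = v} : ℕ) : ℝ) := by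
  have hn : (3 : ℝ) ≤ Fintype.card V := by
    exact_mod_cast hdeg.trans_lt (card_neighborsIn_lt_card G H v)
  have hsn : (2 : ℝ) ≤ sn G (fun _ => 2) v := by
    exact_mod_cast (le_min le_rfl (by have := card_neighborsIn_lt_card G H v; omega)).trans
      (min_le_sn G (fun _ => 2) v)
  have htop : (1 : ℝ) ≤ #{x | top x = v} := by
    exact_mod_cast card_pos.2 ⟨v, by simpa using h.top_of_mem v hv⟩
  have hmax₀ := le_max_left (0 : ℝ) (Fintype.card V / 9 - 3)
  have hmax := le_max_right (0 : ℝ) (Fintype.card V / 9 - 3)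
  push_cast
  obtain hd | hd | hd | hd : #(neighborsIn G H v) = 2 ∨ #(neighborsIn G H v) = 3 ∨
      #(neighborsIn G H v) = 4 ∨ 5 ≤ #(neighborsIn G H v) := by omega
  · have hsn : (Fintype.card V : ℝ) ≤ sn G (fun _ => 2) v + #{x | top x = v} := by
      exact_mod_cast h.card_le_sn_add_of_card_le_two hv hd.le
    rw [hd]
    push_cast
    linarith
  · have hsn : (Fintype.card V : ℝ) ≤ 3 * sn G (fun _ => 2) v + #{x | top x = v} := by
      exact_mod_cast h.card_le_three_mul_sn_add hG hplanar hv hd.le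
    rw [hd]
    push_cast
    linarith
  · rw [hd]
    push_cast
    linarith
  · have hd' : (5 : ℝ) ≤ #(neighborsIn G H v) := by exact_mod_cast hd
    nlinarith

theorem sub_mul_max_le {n p : ℝ} (hn : 3 ≤ n) (hp : 0 ≤ p) (hpn : p + 1 ≤ n)
    (hmany : 14 * n ≤ 45 * (p + 3)) :
    (n - p) * max 0 (n / 9 - 3) ≤ 4 * p * n / 9 - p * (p + 3) / 4 := by
  obtain hsmall | hbig := le_total n 27
  · have hprod : 0 ≤ p * (16 * n / 9 - p - 3) := mul_nonneg hp (by linarith)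
    rw [max_eq_left (by linarith)]
    linarith
  · rw [max_eq_right (by linarith)]
    have hp' : 0 ≤ p - (14 * n / 45 - 3) := by linarith
    have hnp : 0 ≤ n - p := by linarith
    have hn' : 0 ≤ n - 27 := by linarith
    nlinarith [mul_nonneg hp' hnp, mul_nonneg hn' hp', mul_nonneg hn' hnp]

theorem IsPendantForest.coreTarget_le_of_many_pendants (h : IsPendantForest G H par top rank)
    (hG : G.Connected) (hplanar : IsPlanar G) (hdeg : ∀ v ∈ H, 2 ≤ #(neighborsIn G H v))
    (hmany : 14 * Fintype.card V ≤ 45 * (#Hᶜ + 3)) :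
    coreTarget G H ≤ ∑ v ∈ H, ((sn G (fun _ => 2) v + #{x | top x = v} : ℕ) : ℝ) := by
  obtain ⟨v, hv⟩ : H.Nonempty := ⟨_, h.top_mem hG.nonempty.some⟩
  have hcard : (#H + #Hᶜ : ℝ) = Fintype.card V := by exact_mod_cast card_add_card_compl H
  have hH : (1 : ℝ) ≤ #H := by exact_mod_cast card_pos.2 ⟨v, hv⟩
  have harith := sub_mul_max_le (n := Fintype.card V) (p := #Hᶜ)
    (by exact_mod_cast (hdeg v hv).trans_lt (card_neighborsIn_lt_card G H v)) (Nat.cast_nonneg _)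
    (by linarith) (by exact_mod_cast hmany)
  refine le_trans ?_ (sum_le_sum fun v hv =>
    h.le_sn_add_of_two_le_card hG hplanar hv (hdeg v hv))
  rw [sum_sub_distrib, sum_const, nsmul_eq_mul, eq_sub_of_add_eq hcard]
  exact sub_le_sub_left harith _

end Regimes

section SurvivingRate

variable {V : Type*} [Fintype V] {G : SimpleGraph V}

theorem le_sum_sn_of_four_mul_card_edgeSet_le (hG : G.Connected) (hplanar : IsPlanar G)
    (hedges : 4 * Nat.card G.edgeSet ≤ 7 * Fintype.card V) :
    (Fintype.card V * (Fintype.card V - 4 * Nat.card G.edgeSet / 9) - Fintype.card V : ℝ) ≤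
      ∑ v, (sn G (fun _ => 2) v : ℝ) := by
  classical
  obtain ⟨H, par, top, rank, h, hH, hsum⟩ := exists_isPendantForest_singleton_or_two_le_card hG
  rw [sum_card_neighborsIn_univ] at hsum
  refine h.le_sum_sn hsum ?_
  obtain ⟨r, rfl⟩ | hdeg := hH
  · exact h.coreTarget_le_of_singleton
  obtain hfew | hmany := le_total (45 * (#Hᶜ + 3)) (14 * Fintype.card V)
  · have hcard := card_add_card_compl H
    exact h.coreTarget_le_of_few_pendants hG hplanar hdeg hfew (by omega)
  · exact h.coreTarget_le_of_many_pendants hG hplanar hdeg hmany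

theorem surviving_rate_two_of_avg_degree_small'_general (G : SimpleGraph V)
    (hconn : G.Connected) (hplanar : IsPlanar G)
    (n m : ℕ) (hn : n = Fintype.card V) (hm : m = Nat.card G.edgeSet)
    (ε : ℝ) (hε : 1 ≤ ε) (hdeg : (2 * m : ℝ) / n = 9 / 2 - ε) :
    survivingRate G (fun _ => 2) ≥ 2 / 9 * ε - 1 / n := by
  subst hn hm
  have := hconn.nonempty
  have hn : (0 : ℝ) < Fintype.card V := Nat.cast_pos.2 Fintype.card_pos
  have hm : (2 * Nat.card G.edgeSet : ℝ) = (9 / 2 - ε) * Fintype.card V :=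
    (div_eq_iff hn.ne').1 hdeg
  have hedges : (4 * Nat.card G.edgeSet : ℝ) ≤ 7 * Fintype.card V := by
    linarith [le_mul_of_one_le_left hn.le hε]
  rw [ge_iff_le, survivingRate, le_div_iff₀ (pow_pos hn 2)]
  calc (2 / 9 * ε - 1 / Fintype.card V) * (Fintype.card V : ℝ) ^ 2
      = Fintype.card V * (Fintype.card V - 2 * ((9 / 2 - ε) * Fintype.card V) / 9) -
          Fintype.card V := by field_simp; ring
    _ = Fintype.card V * (Fintype.card V - 4 * Nat.card G.edgeSet / 9) - Fintype.card V := by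
      rw [← hm]; ring
    _ ≤ ∑ v, (sn G (fun _ => 2) v : ℝ) :=
      le_sum_sn_of_four_mul_card_edgeSet_le hconn hplanar (by exact_mod_cast hedges)

end SurvivingRate

/-- Theorem 1.2 (case ε > 1): a connected planar graph with `n ≥ 2` vertices, `m` edges
and average degree `2m/n = 9/2 - ε` with `ε ∈ (1, 5/2]` has 2-surviving rate at least
`(2/9)ε - 1/n`. -/
theorem surviving_rate_two_of_avg_degree_small' {V : Type} [Fintype V] (G : SimpleGraph V)
    (hconn : G.Connected) (hplanar : IsPlanar G)
    (n m : ℕ) (hn : n = Fintype.card V) (hm : m = Nat.card G.edgeSet)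
    (hn2 : 2 ≤ n) (ε : ℝ) (hε : ε ∈ Set.Ioc (1 : ℝ) (5 / 2))
    (hdeg : (2 * m : ℝ) / n = 9 / 2 - ε) :
    survivingRate G (fun _ => 2) ≥ 2 / 9 * ε - 1 / n :=
  surviving_rate_two_of_avg_degree_small'_general G hconn hplanar n m hn hm ε hε.1.le hdeg
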